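/- arXiv:1807.04659 — 9 statements merged into one kernel-verified Lean document; each statement's English description precedes it below -/
import Mathlib

section
/- Let m ≥ 1 and, for each i ∈ {1,…,m}, let J_i be a nonempty finite index set and K_i a nonempty finite set of positive integers, and let k^i_{j,s} ∈ ℕ be given for j ∈ J_i, s ∈ K_i. Let a_1,…,a_m be positive integers such that ∑_{j∈J_i, s∈K_i} s·k^i_{j,s} = a_i for every i. Let ν_1,…,ν_m ∈ ℤ and set S_i = ∑_{j<i} ν_j·a_j + ν_i·∑_{j≥i} a_j for 1 ≤ i ≤ m. Let signs ε_{i,j,s} ∈ {1,−1} be given and let χ be an even natural number. Let g₀ be the greatest common divisor of all the k^i_{j,s} (a positive integer, since a_1 > 0). Then the rational number Q = ∑_{l ∣ g₀} μ(l)·(−1)^{(∑_{i,j,s} k^i_{j,s})/l}·∏_{i,j,s} binom(ε_{i,j,s}·χ·s·S_i/l, k^i_{j,s}/l) is divisible by χ·S_m·(∑_{j=1}^m a_j), i.e. there exists c ∈ ℤ such that Q = c·χ·S_m·(∑_{j=1}^m a_j). -/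
/-- The generalized binomial coefficient `x(x−1)⋯(x−n+1)/n!`. -/
def genBinom (x : ℚ) (n : ℕ) : ℚ :=
  (∏ i ∈ Finset.range n, (x - (i : ℚ))) / (Nat.factorial n : ℚ)

/-!
The sign `(-1) ^ k` turns `binom (-x, k)` into the multichoose coefficient of `x` and `k`, which
satisfies `x ∣ k * multichoose x k`. So the product `c_i` of the coefficients with index `i`
satisfies `S_i ∣ c_i * a_i`. Since `S_{i+1} - S_i` is a multiple of `∑_{j>i} a_j`, these
divisibilities propagate: `S_m * ∑ a_j` divides both `S_i ^ 2 * ∏_{j≠i} c_j` and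
`S_i * a_i * ∏_{j≠i} c_j` for every `i`.

Divisibility of the Möbius sum is checked one prime power at a time. If `p ∤ g₀`, some `k^i_{j,s}`
is prime to `p`, and each term is already divisible, because `χ * S_m * ∑ a_j` divides
`(k^i_{j,s}) ^ 2` times the product of all coefficients. If `p ∣ g₀`, the terms `l` and `p * l`
with `p ∤ l` have opposite signs, and it suffices to compare `multichoose (p * x) (p * k)` with
`multichoose x k`. Their quotient is `∏ (p * x + t) / ∏ t` over the `t < p * k` prime to `p`;
pairing `t` with `p * k - t` shows that its square is `1` modulo `p * x * (p * x + p * k)`, and the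
evenness of `χ` allows the square to be removed.
-/

open Finset ArithmeticFunction

section Multichoose

theorem factorial_mul_multichoose {R : Type*} [CommRing R] [BinomialRing R] (x : R) (n : ℕ) :
    (n.factorial : R) * Ring.multichoose x n = ∏ i ∈ range n, (x + i) := by
  rw [← nsmul_eq_mul, Ring.factorial_nsmul_multichoose_eq_ascPochhammer,
    Polynomial.ascPochhammer_smeval_eq_eval]
  induction n with
  | zero => simp
  | succ n ih => rw [ascPochhammer_succ_eval, ih, prod_range_succ]

theorem succ_mul_multichoose_succ {R : Type*} [CommRing R] [BinomialRing R] (x : R) (n : ℕ) :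
    ((n + 1 : ℕ) : R) * Ring.multichoose x (n + 1) = x * Ring.multichoose (x + 1) n := by
  have := BinomialRing.toIsAddTorsionFree (R := R)
  apply nsmul_right_injective n.factorial_ne_zero
  have shift : ∏ i ∈ range n, (x + 1 + (i : R)) = ∏ i ∈ range n, (x + ((i + 1 : ℕ) : R)) :=
    prod_congr rfl fun i _ => by push_cast; ring
  simp only [nsmul_eq_mul]
  calc (n.factorial : R) * (((n + 1 : ℕ) : R) * Ring.multichoose x (n + 1))
      = ((n + 1).factorial : R) * Ring.multichoose x (n + 1) := by
        rw [Nat.factorial_succ]; push_cast; ring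
    _ = (∏ i ∈ range n, (x + 1 + (i : R))) * x := by
        rw [factorial_mul_multichoose, prod_range_succ', shift, Nat.cast_zero, add_zero]
    _ = (n.factorial : R) * (x * Ring.multichoose (x + 1) n) := by
        rw [← factorial_mul_multichoose]; ring

theorem dvd_natCast_mul_multichoose {R : Type*} [CommRing R] [BinomialRing R] (x : R) (n : ℕ) :
    x ∣ (n : R) * Ring.multichoose x n := by
  cases n with
  | zero => simp
  | succ n => exact ⟨_, succ_mul_multichoose_succ x n⟩

theorem neg_one_pow_mul_genBinom (x : ℤ) (n : ℕ) :
    (-1) ^ n * genBinom x n = (Ring.multichoose (-x) n : ℤ) := by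
  have sign : ∏ i ∈ range n, (-(x : ℚ) + i) = (-1) ^ n * ∏ i ∈ range n, ((x : ℚ) - i) := by
    simpa [neg_add_eq_sub] using prod_neg (s := range n) fun i : ℕ => (x : ℚ) - i
  have key := congrArg (Int.cast : ℤ → ℚ) (factorial_mul_multichoose (-x) n)
  push_cast at key
  rw [genBinom, ← mul_div_assoc, ← sign, ← key, mul_div_cancel_left₀ _ (by positivity)]

end Multichoose

/-- The integers `0 ≤ t < p * k` that are not divisible by `p`. -/
def nonMultiples (p k : ℕ) : Finset ℕ := {t ∈ range (p * k) | ¬ p ∣ t}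

namespace nonMultiples

variable {p : ℕ} (k : ℕ)

theorem prod_range_mul {M : Type*} [CommMonoid M] (hp : 0 < p) (f : ℕ → M) :
    ∏ i ∈ range (p * k), f i = (∏ i ∈ range k, f (p * i)) * ∏ t ∈ nonMultiples p k, f t := by
  have multiples : {t ∈ range (p * k) | p ∣ t} = (range k).image (p * ·) := by
    ext t
    simp only [mem_filter, mem_range, mem_image]
    constructor
    · rintro ⟨ht, i, rfl⟩
      exact ⟨i, lt_of_mul_lt_mul_left ht p.zero_le, rfl⟩
    · rintro ⟨i, hi, rfl⟩
      exact ⟨Nat.mul_lt_mul_of_pos_left hi hp, dvd_mul_right p i⟩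
  rw [← prod_filter_mul_prod_filter_not _ (p ∣ ·), multiples,
    prod_image fun _ _ _ _ h => Nat.eq_of_mul_eq_mul_left hp h, nonMultiples]

theorem prod_reflect {M : Type*} [CommMonoid M] (p : ℕ) (f : ℕ → M) :
    ∏ t ∈ nonMultiples p k, f (p * k - t) = ∏ t ∈ nonMultiples p k, f t := by
  have maps : ∀ t ∈ nonMultiples p k, p * k - t ∈ nonMultiples p k := by
    intro t ht
    simp only [nonMultiples, mem_filter, mem_range] at ht ⊢
    have pos : 0 < t := Nat.pos_of_ne_zero fun h => ht.2 (h ▸ dvd_zero p)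
    exact ⟨by omega, fun h => ht.2 ((Nat.dvd_sub_iff_right ht.1.le (dvd_mul_right p k)).mp h)⟩
  have invol : ∀ t ∈ nonMultiples p k, p * k - (p * k - t) = t := fun t ht =>
    Nat.sub_sub_self (mem_range.mp (mem_filter.mp ht).1).le
  exact prod_nbij' (p * k - ·) (p * k - ·) maps maps invol invol fun _ _ => rfl

theorem isCoprime_prod (hp : p.Prime) : IsCoprime (p : ℤ) (∏ t ∈ nonMultiples p k, (t : ℤ)) :=
  IsCoprime.prod_right fun _ ht =>
    Nat.isCoprime_iff_coprime.mpr (hp.coprime_iff_not_dvd.mpr (mem_filter.mp ht).2)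

theorem factorial_mul_eq (hp : 0 < p) :
    ((p * k).factorial : ℤ) = p ^ k * k.factorial * ∏ t ∈ nonMultiples p k, (t : ℤ) := by
  have factorial_eq (n : ℕ) : ((n.factorial : ℕ) : ℤ) = ∏ i ∈ range n, ((n - i : ℕ) : ℤ) := by
    rw [← Nat.descFactorial_self, Nat.descFactorial_eq_prod_range, Nat.cast_prod]
  rw [factorial_eq (p * k), prod_range_mul k hp, prod_reflect k p fun t => (t : ℤ), factorial_eq k]
  simp only [← Nat.mul_sub, Nat.cast_mul, prod_mul_distrib, prod_const, card_range]

end nonMultiples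

theorem dvd_mul_prod_sub_prod {R ι : Type*} [CommRing R] {d P : R} {s : Finset ι} {f g : ι → R}
    (h : ∀ i ∈ s, d ∣ P * (f i - g i)) : d ∣ P * (∏ i ∈ s, f i - ∏ i ∈ s, g i) := by
  classical
  induction s using Finset.induction_on with
  | empty => simp
  | insert a s ha ih =>
    rw [prod_insert ha, prod_insert ha]
    have h_last := h a (mem_insert_self a s)
    have h_rest := ih fun i hi => h i (mem_insert_of_mem hi)
    convert dvd_add (h_last.mul_right (∏ i ∈ s, f i)) (h_rest.mul_left (g a)) using 1
    ring

section Congruence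

variable {p : ℕ} (k : ℕ)

theorem multichoose_mul_mul_prod_nonMultiples (hp : 0 < p) (x : ℤ) :
    Ring.multichoose (p * x) (p * k) * ∏ t ∈ nonMultiples p k, (t : ℤ) =
      Ring.multichoose x k * ∏ t ∈ nonMultiples p k, (p * x + t) := by
  have split := factorial_mul_multichoose (p * x : ℤ) (p * k)
  have pull_out : ∏ i ∈ range k, (p * x + (p * i : ℕ) : ℤ) = p ^ k * ∏ i ∈ range k, (x + i) := by
    simp only [Nat.cast_mul, ← mul_add, prod_mul_distrib, prod_const, card_range]
  rw [nonMultiples.prod_range_mul k hp, nonMultiples.factorial_mul_eq k hp, pull_out,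
    ← factorial_mul_multichoose] at split
  have nonzero : (p ^ k * k.factorial : ℤ) ≠ 0 := by positivity
  apply mul_left_cancel₀ nonzero
  linear_combination split

theorem mul_dvd_sq_prod_nonMultiples_sub {R : Type*} [CommRing R] (p : ℕ) (x : R) :
    x * (x + p * k) ∣
      (∏ t ∈ nonMultiples p k, (x + t)) ^ 2 - (∏ t ∈ nonMultiples p k, (t : R)) ^ 2 := by
  have sq_eq (y : R) : (∏ t ∈ nonMultiples p k, (y + t)) ^ 2 =
      ∏ t ∈ nonMultiples p k, (y + t) * (y + (p * k - t)) := by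
    rw [prod_mul_distrib, sq]
    congr 1
    rw [← nonMultiples.prod_reflect]
    refine prod_congr rfl fun t ht => ?_
    rw [Nat.cast_sub (mem_range.mp (mem_filter.mp ht).1).le, Nat.cast_mul]
  have sq_eq_zero := sq_eq 0
  simp only [zero_add] at sq_eq_zero
  rw [sq_eq, sq_eq_zero, ← one_mul (_ - _)]
  exact dvd_mul_prod_sub_prod fun t _ => ⟨1, by ring⟩

/-- With `M = ∏ (p * (χ * v) + t)` and `D = ∏ t`, the identity `M ^ 2 - D ^ 2 = (M - D) * (M + D)`
turns the divisibility of `M ^ 2 - D ^ 2` into one of `M - D`: as `χ` is even, `U = (M + D) / 2` is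
an integer congruent to `D` modulo `p`. -/
theorem exists_isCoprime_dvd_mul_multichoose_mul_sub (hp : p.Prime) {χ : ℤ} (hχ : Even χ) (v : ℤ) :
    ∃ U : ℤ, IsCoprime (p : ℤ) U ∧
      χ * (p * v) ^ 2 ∣ U * (Ring.multichoose (χ * v) k *
        (∏ t ∈ nonMultiples p k, (p * (χ * v) + t) - ∏ t ∈ nonMultiples p k, (t : ℤ))) := by
  obtain ⟨c, rfl⟩ := hχ.two_dvd
  set B := Ring.multichoose (2 * c * v) k
  set D := ∏ t ∈ nonMultiples p k, (t : ℤ)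
  set M := ∏ t ∈ nonMultiples p k, (p * (2 * c * v) + t : ℤ)
  obtain ⟨r, hr⟩ : p * (2 * c * v) ∣ M - D := by
    rw [← one_mul (M - D)]
    exact dvd_mul_prod_sub_prod fun t _ => ⟨1, by ring⟩
  obtain ⟨b, hb⟩ : 2 * c * v ∣ k * B := dvd_natCast_mul_multichoose _ k
  obtain ⟨s, hs⟩ := mul_dvd_sq_prod_nonMultiples_sub k p (p * (2 * c * v))
  refine ⟨D + p * (c * v * r), ?_, c * (B + b) * s, ?_⟩
  · exact (nonMultiples.isCoprime_prod k hp).add_mul_left_right _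
  · apply mul_left_cancel₀ (two_ne_zero (α := ℤ))
    linear_combination B * hs - B * (M - D) * hr + p ^ 2 * (2 * c * v) * s * hb

end Congruence

/-- The sums `∑ j, ν (min i j) * a j`; these are the paper's
`S_i = ∑_{j<i} ν_j a_j + ν_i ∑_{j≥i} a_j`, see `minSum_eq_sum_Iio_add`. -/
def minSum {R ι : Type*} [CommRing R] [Fintype ι] [LinearOrder ι] (ν a : ι → R) (i : ι) : R :=
  ∑ j, ν (min i j) * a j

section MinSum

variable {R : Type*} [CommRing R]

theorem minSum_mul_left {ι : Type*} [Fintype ι] [LinearOrder ι] (ν a : ι → R) (l : R) (i : ι) :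
    minSum ν (fun j => l * a j) i = l * minSum ν a i := by
  simp only [minSum, mul_sum, mul_left_comm]

theorem minSum_eq_sum_Iio_add {ι : Type*} [Fintype ι] [LinearOrder ι] [LocallyFiniteOrderBot ι]
    [LocallyFiniteOrderTop ι] (ν a : ι → R) (i : ι) :
    minSum ν a i = ∑ j ∈ Iio i, ν j * a j + ν i * ∑ j ∈ Ici i, a j := by
  rw [minSum, ← sum_filter_add_sum_filter_not univ (· < i), mul_sum]
  simp only [not_lt, filter_gt_eq_Iio, filter_le_eq_Ici]
  congr 1 <;> refine sum_congr rfl fun j hj => ?_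
  · rw [min_eq_right (mem_Iio.mp hj).le]
  · rw [min_eq_left (mem_Ici.mp hj)]

variable {m : ℕ} (ν a : Fin (m + 1) → R)

theorem minSum_zero : minSum ν a 0 = ν 0 * ∑ j, a j := by
  simp [minSum, mul_sum]

theorem fin_Ici_succ (i : Fin m) : Ici i.succ = Ioi i.castSucc := by
  ext j
  simp [Fin.castSucc_lt_iff_succ_le]

theorem fin_Iio_succ (i : Fin m) : Iio i.succ = insert i.castSucc (Iio i.castSucc) := by
  ext j
  simp [← Fin.le_castSucc_iff]

theorem minSum_succ (i : Fin m) :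
    minSum ν a i.succ =
      minSum ν a i.castSucc + (ν i.succ - ν i.castSucc) * ∑ j ∈ Ioi i.castSucc, a j := by
  rw [minSum_eq_sum_Iio_add, minSum_eq_sum_Iio_add, fin_Ici_succ, fin_Iio_succ,
    sum_insert notMem_Iio_self, ← Ioi_insert, sum_insert notMem_Ioi_self]
  ring

variable {ν a} {c : Fin (m + 1) → R}

theorem sum_dvd_mul_prod_Iio (hc : ∀ j, minSum ν a j ∣ c j * a j) (i : Fin (m + 1)) :
    ∑ j, a j ∣ minSum ν a i * ∏ j ∈ Iio i, c j ∧
      ∑ j, a j ∣ (∑ j ∈ Ici i, a j) * ∏ j ∈ Iio i, c j := by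
  induction i using Fin.induction with
  | zero =>
    have h_Iio : Iio (0 : Fin (m + 1)) = ∅ := Iio_bot
    have h_Ici : Ici (0 : Fin (m + 1)) = univ := Ici_bot
    simp [minSum_zero, h_Iio, h_Ici]
  | succ i ih =>
    obtain ⟨⟨x, hx⟩, ⟨y, hy⟩⟩ := ih
    obtain ⟨z, hz⟩ := hc i.castSucc
    rw [← Ioi_insert, sum_insert notMem_Ioi_self] at hy
    rw [minSum_succ, fin_Ici_succ, fin_Iio_succ, prod_insert notMem_Iio_self]
    set T := ∑ j ∈ Ioi i.castSucc, a j
    have h_tail : ∑ j, a j ∣ T * (c i.castSucc * ∏ j ∈ Iio i.castSucc, c j) :=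
      ⟨y * c i.castSucc - x * z, by
        linear_combination c i.castSucc * hy - z * hx - (∏ j ∈ Iio i.castSucc, c j) * hz⟩
    refine ⟨?_, h_tail⟩
    rw [add_mul, mul_assoc (ν i.succ - ν i.castSucc)]
    exact dvd_add ⟨x * c i.castSucc, by linear_combination c i.castSucc * hx⟩ (h_tail.mul_left _)

theorem minSum_last_dvd_mul_prod_Ioi (hc : ∀ j, minSum ν a j ∣ c j * a j) (i : Fin (m + 1)) :
    minSum ν a (Fin.last m) ∣ minSum ν a i * ∏ j ∈ Ioi i, c j ∧
      minSum ν a (Fin.last m) ∣ (∑ j ∈ Ioi i, a j) * ∏ j ∈ Ioi i, c j := by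
  induction i using Fin.reverseInduction with
  | last =>
    have h_Ioi : Ioi (Fin.last m) = ∅ := Ioi_top
    simp [h_Ioi]
  | cast i ih =>
    obtain ⟨⟨x, hx⟩, ⟨y, hy⟩⟩ := ih
    obtain ⟨z, hz⟩ := hc i.succ
    have h_step := minSum_succ ν a i
    rw [← fin_Ici_succ, ← Ioi_insert, sum_insert notMem_Ioi_self] at h_step ⊢
    rw [prod_insert notMem_Ioi_self]
    set T := ∑ j ∈ Ioi i.succ, a j
    have h_tail : minSum ν a (Fin.last m) ∣
        (a i.succ + T) * (c i.succ * ∏ j ∈ Ioi i.succ, c j) :=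
      ⟨y * c i.succ + x * z, by
        linear_combination c i.succ * hy + z * hx + (∏ j ∈ Ioi i.succ, c j) * hz⟩
    refine ⟨?_, h_tail⟩
    rw [eq_sub_of_add_eq h_step.symm, sub_mul, mul_assoc (ν i.succ - ν i.castSucc)]
    exact dvd_sub ⟨x * c i.succ, by linear_combination c i.succ * hx⟩ (h_tail.mul_left _)

theorem minSum_last_mul_sum_dvd (hc : ∀ j, minSum ν a j ∣ c j * a j) (i : Fin (m + 1)) :
    minSum ν a (Fin.last m) * ∑ j, a j ∣ minSum ν a i * minSum ν a i * ∏ j ∈ {i}ᶜ, c j ∧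
      minSum ν a (Fin.last m) * ∑ j, a j ∣ minSum ν a i * a i * ∏ j ∈ {i}ᶜ, c j := by
  obtain ⟨⟨x, hx⟩, ⟨y, hy⟩⟩ := sum_dvd_mul_prod_Iio hc i
  obtain ⟨⟨x', hx'⟩, ⟨y', hy'⟩⟩ := minSum_last_dvd_mul_prod_Ioi hc i
  rw [← Ioi_insert, sum_insert notMem_Ioi_self] at hy
  rw [← Ioi_disjUnion_Iio, prod_disjUnion]
  set P := ∏ j ∈ Iio i, c j
  set P' := ∏ j ∈ Ioi i, c j
  set S := minSum ν a i
  set A := ∑ j, a j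
  refine ⟨⟨x' * x, ?_⟩, ⟨x' * y - x * y', ?_⟩⟩
  · linear_combination S * P * hx' + minSum ν a (Fin.last m) * x' * hx
  · linear_combination (S * P') * hy + A * y * hx' - (∑ j ∈ Ioi i, a j) * P' * hx - A * x * hy'

end MinSum

theorem dvd_prod_mul_sum {R ι : Type*} [CommRing R] {d : R} {s : Finset ι} {f b : ι → R}
    (h : ∀ i ∈ s, d ∣ b i * f i) : d ∣ (∏ i ∈ s, f i) * ∑ i ∈ s, b i := by
  rw [mul_sum]
  refine dvd_sum fun i hi => (h i hi).trans ?_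
  rw [mul_comm (b i)]
  exact mul_dvd_mul_right (dvd_prod_of_mem f hi) (b i)

section MultichooseProd

variable {m : ℕ} {I : Fin (m + 1) → Type*} [∀ i, Fintype (I i)]

/-- The numbers `a_i = ∑ s · k^i_{j,s}`, for a family `w` of weights `s` and a family `κ` of
multiplicities, both indexed by the pairs `q = (j, s)`. -/
def weightedSum (w : ∀ i, I i → ℤ) (κ : ∀ i, I i → ℕ) (i : Fin (m + 1)) : ℤ :=
  ∑ q, w i q * κ i q

/-- The binomial coefficient `(-1) ^ k * binom (-e · χ · s · S_i, k)` attached to the index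
`q = (j, s)`, where `S_i` is computed from `a_i = weightedSum w κ i`. Writing it as a multichoose
coefficient absorbs the sign `(-1) ^ k`. -/
def signedBinom (w e : ∀ i, I i → ℤ) (ν : Fin (m + 1) → ℤ) (χ : ℤ) (κ : ∀ i, I i → ℕ)
    (i : Fin (m + 1)) (q : I i) : ℤ :=
  Ring.multichoose (χ * (w i q * e i q * minSum ν (weightedSum w κ) i)) (κ i q)

/-- The product of all the coefficients `signedBinom`, that is, the contribution of the family of
multiplicities `κ` to the Möbius sum. -/
def signedBinomProd (w e : ∀ i, I i → ℤ) (ν : Fin (m + 1) → ℤ) (χ : ℤ) (κ : ∀ i, I i → ℕ) : ℤ :=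
  ∏ i, ∏ q, signedBinom w e ν χ κ i q

/-- The number `χ · S_m · ∑ a_j` by which the Möbius sum is to be divisible. -/
def modulus (ν : Fin (m + 1) → ℤ) (χ : ℤ) (a : Fin (m + 1) → ℤ) : ℤ :=
  χ * (minSum ν a (Fin.last m) * ∑ j, a j)

theorem modulus_mul_left (ν : Fin (m + 1) → ℤ) (χ l : ℤ) (a : Fin (m + 1) → ℤ) :
    modulus ν χ (fun i => l * a i) = l ^ 2 * modulus ν χ a := by
  rw [modulus, minSum_mul_left, ← mul_sum, modulus]
  ring

theorem weightedSum_smul (w : ∀ i, I i → ℤ) (l : ℕ) (κ : ∀ i, I i → ℕ) :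
    weightedSum w (l • κ) = fun i => l * weightedSum w κ i := by
  ext i
  simp only [weightedSum, Pi.smul_apply, smul_eq_mul, Nat.cast_mul, mul_sum, mul_left_comm]

variable (w e : ∀ i, I i → ℤ) (ν : Fin (m + 1) → ℤ) (χ : ℤ) (κ : ∀ i, I i → ℕ)

theorem dvd_mul_signedBinom (i : Fin (m + 1)) (q : I i) :
    χ * (w i q * minSum ν (weightedSum w κ) i) ∣ κ i q * signedBinom w e ν χ κ i q :=
  dvd_trans ⟨e i q, by ring⟩ (dvd_natCast_mul_multichoose _ (κ i q))

theorem minSum_dvd_weight_mul_signedBinom (i : Fin (m + 1)) (q : I i) :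
    minSum ν (weightedSum w κ) i ∣ w i q * κ i q * signedBinom w e ν χ κ i q := by
  rw [mul_assoc]
  exact (dvd_trans ⟨χ * w i q, by ring⟩ (dvd_mul_signedBinom w e ν χ κ i q)).mul_left _

theorem minSum_dvd_prod_signedBinom_mul (i : Fin (m + 1)) :
    minSum ν (weightedSum w κ) i ∣ (∏ q, signedBinom w e ν χ κ i q) * weightedSum w κ i :=
  dvd_prod_mul_sum fun q _ => minSum_dvd_weight_mul_signedBinom w e ν χ κ i q

theorem signedBinomProd_eq_mul [∀ i, DecidableEq (I i)] (i : Fin (m + 1)) (q : I i) :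
    signedBinomProd w e ν χ κ =
      signedBinom w e ν χ κ i q * (∏ r ∈ {q}ᶜ, signedBinom w e ν χ κ i r) *
        ∏ j ∈ {i}ᶜ, ∏ r, signedBinom w e ν χ κ j r := by
  rw [signedBinomProd, Fintype.prod_eq_mul_prod_compl i, Fintype.prod_eq_mul_prod_compl q]

theorem modulus_dvd_sq_mul_signedBinomProd (i : Fin (m + 1)) (q : I i) :
    modulus ν χ (weightedSum w κ) ∣ (κ i q : ℤ) ^ 2 * signedBinomProd w e ν χ κ := by
  classical
  obtain ⟨⟨x, hx⟩, ⟨y, hy⟩⟩ :=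
    minSum_last_mul_sum_dvd (minSum_dvd_prod_signedBinom_mul w e ν χ κ) i
  obtain ⟨z, hz⟩ := dvd_mul_signedBinom w e ν χ κ i q
  obtain ⟨u, hu⟩ : minSum ν (weightedSum w κ) i ∣
      (∏ r ∈ {q}ᶜ, signedBinom w e ν χ κ i r) * ∑ r ∈ {q}ᶜ, w i r * κ i r :=
    dvd_prod_mul_sum fun r _ => minSum_dvd_weight_mul_signedBinom w e ν χ κ i r
  have h_split : weightedSum w κ i = w i q * κ i q + ∑ r ∈ {q}ᶜ, w i r * κ i r :=
    Fintype.sum_eq_add_sum_compl q _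
  rw [signedBinomProd_eq_mul w e ν χ κ i q, modulus]
  set S := minSum ν (weightedSum w κ) i
  set C := ∏ r ∈ {q}ᶜ, signedBinom w e ν χ κ i r
  set R := ∏ j ∈ {i}ᶜ, ∏ r, signedBinom w e ν χ κ j r
  refine ⟨z * (C * y - u * x), ?_⟩
  linear_combination κ i q * C * R * hz + χ * z * C * hy - χ * z * u * hx - χ * z * S * R * hu
    - χ * z * S * C * R * h_split

theorem signedBinom_smul (l : ℕ) (i : Fin (m + 1)) (q : I i) :
    signedBinom w e ν χ (l • κ) i q =
      Ring.multichoose (l * (χ * (w i q * e i q * minSum ν (weightedSum w κ) i))) (l * κ i q) := by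
  rw [signedBinom, weightedSum_smul, minSum_mul_left]
  congr 1
  ring

variable {χ}

theorem pow_dvd_signedBinomProd_mul_prod_sub_prod (hχ : Even χ) {p n : ℕ} (hp : p.Prime)
    (hn : (p : ℤ) ^ n ∣ p ^ 2 * modulus ν χ (weightedSum w κ)) (i : Fin (m + 1)) (q : I i) :
    (p : ℤ) ^ n ∣ signedBinomProd w e ν χ κ *
      (∏ t ∈ nonMultiples p (κ i q),
          (p * (χ * (w i q * e i q * minSum ν (weightedSum w κ) i)) + t) -
        ∏ t ∈ nonMultiples p (κ i q), (t : ℤ)) := by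
  classical
  obtain ⟨U, hU, y, hy⟩ := exists_isCoprime_dvd_mul_multichoose_mul_sub (κ i q) hp hχ
    (w i q * e i q * minSum ν (weightedSum w κ) i)
  obtain ⟨z, hz⟩ := (minSum_last_mul_sum_dvd (minSum_dvd_prod_signedBinom_mul w e ν χ κ) i).1
  refine (hU.pow_left (m := n)).dvd_of_dvd_mul_left (hn.trans ?_)
  rw [signedBinomProd_eq_mul w e ν χ κ i q, modulus]
  set C := ∏ r ∈ {q}ᶜ, signedBinom w e ν χ κ i r
  set R := ∏ j ∈ {i}ᶜ, ∏ r, signedBinom w e ν χ κ j r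
  rw [← signedBinom] at hy
  refine ⟨C * (w i q * e i q) ^ 2 * y * z, ?_⟩
  linear_combination C * R * hy + p ^ 2 * χ * C * (w i q * e i q) ^ 2 * y * hz

theorem pow_dvd_signedBinomProd_smul_sub (hχ : Even χ) {p n : ℕ} (hp : p.Prime)
    (hn : (p : ℤ) ^ n ∣ p ^ 2 * modulus ν χ (weightedSum w κ)) :
    (p : ℤ) ^ n ∣ signedBinomProd w e ν χ (p • κ) - signedBinomProd w e ν χ κ := by
  set x := fun i q => χ * (w i q * e i q * minSum ν (weightedSum w κ) i)
  set M := fun i q => ∏ t ∈ nonMultiples p (κ i q), (p * x i q + t)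
  set D := fun i (q : I i) => ∏ t ∈ nonMultiples p (κ i q), (t : ℤ)
  have h_ratio : signedBinomProd w e ν χ (p • κ) * ∏ i, ∏ q, D i q =
      signedBinomProd w e ν χ κ * ∏ i, ∏ q, M i q := by
    simp only [signedBinomProd, ← prod_mul_distrib, signedBinom_smul]
    exact prod_congr rfl fun i _ => prod_congr rfl fun q _ =>
      multichoose_mul_mul_prod_nonMultiples (κ i q) hp.pos (x i q)
  have h_coprime : IsCoprime ((p : ℤ) ^ n) (∏ i, ∏ q, D i q) :=
    (IsCoprime.prod_right fun i _ => IsCoprime.prod_right fun q _ =>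
      nonMultiples.isCoprime_prod (κ i q) hp).pow_left
  apply h_coprime.dvd_of_dvd_mul_right
  rw [sub_mul, h_ratio, ← mul_sub]
  exact dvd_mul_prod_sub_prod fun i _ => dvd_mul_prod_sub_prod fun q _ =>
    pow_dvd_signedBinomProd_mul_prod_sub_prod w e ν κ hχ hp hn i q

theorem pow_dvd_signedBinomProd {p n : ℕ} {i : Fin (m + 1)} {q : I i} (hp : p.Prime)
    (hq : ¬ p ∣ κ i q) (hn : (p : ℤ) ^ n ∣ modulus ν χ (weightedSum w κ)) :
    (p : ℤ) ^ n ∣ signedBinomProd w e ν χ κ :=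
  have h_coprime : IsCoprime (p : ℤ) (κ i q) :=
    Nat.isCoprime_iff_coprime.mpr (hp.coprime_iff_not_dvd.mpr hq)
  h_coprime.pow.dvd_of_dvd_mul_left
    (hn.trans (modulus_dvd_sq_mul_signedBinomProd w e ν χ κ i q))

end MultichooseProd

theorem moebius_prime_mul_of_not_dvd {p l : ℕ} (hp : p.Prime) (hpl : ¬ p ∣ l) :
    moebius (p * l) = -moebius l := by
  rw [isMultiplicative_moebius.map_mul_of_coprime (hp.coprime_iff_not_dvd.mpr hpl),
    moebius_apply_prime hp, neg_one_mul]

theorem moebius_prime_mul_of_dvd {p l : ℕ} (hp : p.Prime) (hpl : p ∣ l) : moebius (p * l) = 0 :=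
  moebius_eq_zero_of_not_squarefree fun h =>
    hp.one_lt.ne' (Nat.isUnit_iff.mp (h p (mul_dvd_mul_left p hpl)))

theorem sum_divisors_filter_dvd_moebius_mul {p g : ℕ} (hp : p.Prime) (hpg : p ∣ g) (f : ℕ → ℤ) :
    ∑ l ∈ g.divisors with p ∣ l, moebius l * f l =
      ∑ l ∈ g.divisors with ¬ p ∣ l, moebius (p * l) * f (p * l) := by
  rw [← sum_image (f := fun l => moebius l * f l)
    fun _ _ _ _ h => Nat.eq_of_mul_eq_mul_left hp.pos h]
  symm
  apply sum_subset
  · intro l' hl'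
    obtain ⟨l, hl, rfl⟩ := mem_image.mp hl'
    simp only [mem_filter, Nat.mem_divisors] at hl ⊢
    exact ⟨⟨(hp.coprime_iff_not_dvd.mpr hl.2).mul_dvd_of_dvd_of_dvd hpg hl.1.1, hl.1.2⟩,
      dvd_mul_right p l⟩
  · intro l' hl' hnot
    simp only [mem_filter, Nat.mem_divisors] at hl'
    obtain ⟨⟨hg, hg0⟩, l, rfl⟩ := hl'
    have hpl : p ∣ l := by
      by_contra hpl
      refine hnot (mem_image_of_mem _ ?_)
      simp [hpl, hg0, (dvd_mul_left l p).trans hg]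
    rw [moebius_prime_mul_of_dvd hp hpl, zero_mul]

theorem sum_divisors_moebius_mul_eq_sum_sub {p g : ℕ} (hp : p.Prime) (hpg : p ∣ g) (f : ℕ → ℤ) :
    ∑ l ∈ g.divisors, moebius l * f l =
      ∑ l ∈ g.divisors with ¬ p ∣ l, moebius l * (f l - f (p * l)) := by
  rw [← sum_filter_add_sum_filter_not g.divisors (p ∣ ·),
    sum_divisors_filter_dvd_moebius_mul hp hpg, ← sum_add_distrib]
  refine sum_congr rfl fun l hl => ?_
  rw [moebius_prime_mul_of_not_dvd hp (mem_filter.mp hl).2]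
  ring

theorem int_dvd_of_forall_prime_pow_dvd {N Q : ℤ}
    (h : ∀ p n : ℕ, p.Prime → (p : ℤ) ^ n ∣ N → (p : ℤ) ^ n ∣ Q) : N ∣ Q := by
  rw [← Int.natAbs_dvd_natAbs, Nat.dvd_iff_prime_pow_dvd_dvd]
  intro p n hp hN
  have := h p n hp (by exact_mod_cast Int.natCast_dvd.mpr hN)
  exact Int.natCast_dvd.mp (by exact_mod_cast this)

theorem eq_smul_div {ι : Type*} {I : ι → Type*} {k : ∀ i, I i → ℕ} {l : ℕ}
    (hl : ∀ i q, l ∣ k i q) : k = l • fun i q => k i q / l := by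
  ext i q
  exact (Nat.mul_div_cancel' (hl i q)).symm

section MoebiusSum

variable {m : ℕ} {I : Fin (m + 1) → Type*} [∀ i, Fintype (I i)]
  (w e : ∀ i, I i → ℤ) (ν : Fin (m + 1) → ℤ) {χ : ℤ} {k : ∀ i, I i → ℕ}

theorem modulus_weightedSum_eq_sq_mul {l : ℕ} (hl : ∀ i q, l ∣ k i q) :
    modulus ν χ (weightedSum w k) =
      (l : ℤ) ^ 2 * modulus ν χ (weightedSum w fun i q => k i q / l) := by
  conv_lhs => rw [eq_smul_div hl, weightedSum_smul, modulus_mul_left]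

theorem pow_dvd_signedBinomProd_div_sub (hχ : Even χ) {p n l : ℕ} (hp : p.Prime) (hpl : ¬ p ∣ l)
    (hk : ∀ i q, p * l ∣ k i q) (hn : (p : ℤ) ^ n ∣ modulus ν χ (weightedSum w k)) :
    (p : ℤ) ^ n ∣ signedBinomProd w e ν χ (fun i q => k i q / l) -
      signedBinomProd w e ν χ (fun i q => k i q / (p * l)) := by
  have h_smul : (fun i q => k i q / l) = p • fun i q => k i q / (p * l) := by
    simpa only [Nat.div_div_eq_div_mul, mul_comm p l] using
      eq_smul_div fun i q => Nat.dvd_div_of_mul_dvd (mul_comm p l ▸ hk i q)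
  have h_coprime : IsCoprime (p : ℤ) l :=
    Nat.isCoprime_iff_coprime.mpr (hp.coprime_iff_not_dvd.mpr hpl)
  rw [modulus_weightedSum_eq_sq_mul w ν hk, Nat.cast_mul, mul_pow, mul_comm ((p : ℤ) ^ 2),
    mul_assoc] at hn
  rw [h_smul]
  exact pow_dvd_signedBinomProd_smul_sub w e ν _ hχ hp (h_coprime.pow.dvd_of_dvd_mul_left hn)

theorem pow_dvd_signedBinomProd_div {p n l : ℕ} {i : Fin (m + 1)} {q : I i} (hp : p.Prime)
    (hq : ¬ p ∣ k i q) (hk : ∀ i q, l ∣ k i q)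
    (hn : (p : ℤ) ^ n ∣ modulus ν χ (weightedSum w k)) :
    (p : ℤ) ^ n ∣ signedBinomProd w e ν χ (fun i q => k i q / l) := by
  have h_coprime : IsCoprime (p : ℤ) l := Nat.isCoprime_iff_coprime.mpr
    (hp.coprime_iff_not_dvd.mpr fun h => hq (h.trans (hk i q)))
  rw [modulus_weightedSum_eq_sq_mul w ν hk] at hn
  exact pow_dvd_signedBinomProd w e ν _ hp (fun h => hq (h.trans (Nat.div_dvd_of_dvd (hk i q))))
    (h_coprime.pow.dvd_of_dvd_mul_left hn)

theorem modulus_dvd_sum_moebius_mul_signedBinomProd (hχ : Even χ) {g : ℕ}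
    (hg : ∀ n, n ∣ g ↔ ∀ i q, n ∣ k i q) :
    modulus ν χ (weightedSum w k) ∣
      ∑ l ∈ g.divisors, moebius l * signedBinomProd w e ν χ (fun i q => k i q / l) := by
  refine int_dvd_of_forall_prime_pow_dvd fun p n hp hn => ?_
  by_cases hpg : p ∣ g
  · rw [sum_divisors_moebius_mul_eq_sum_sub hp hpg]
    refine dvd_sum fun l hl => Dvd.dvd.mul_left ?_ _
    obtain ⟨hlg, hpl⟩ := mem_filter.mp hl
    have hplg : p * l ∣ g := (hp.coprime_iff_not_dvd.mpr hpl).mul_dvd_of_dvd_of_dvd hpg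
      (Nat.dvd_of_mem_divisors hlg)
    exact pow_dvd_signedBinomProd_div_sub w e ν hχ hp hpl ((hg _).mp hplg) hn
  · obtain ⟨i, q, hq⟩ : ∃ i q, ¬ p ∣ k i q := by
      simpa only [hg, not_forall] using hpg
    refine dvd_sum fun l hl => Dvd.dvd.mul_left ?_ _
    exact pow_dvd_signedBinomProd_div w e ν hp hq ((hg l).mp (Nat.dvd_of_mem_divisors hl)) hn

/-- The division by `l` of the argument of the binomial coefficient is exact because `S_i`
is homogeneous of degree one in the multiplicities. -/
theorem signedBinom_div_eq (i : Fin (m + 1)) (q : I i) {l : ℕ} (hl0 : l ≠ 0)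
    (hl : ∀ i q, l ∣ k i q) :
    (signedBinom w e ν χ (fun i q => k i q / l) i q : ℚ) = (-1) ^ (k i q / l) *
      genBinom (((-e i q * χ * w i q * minSum ν (weightedSum w k) i : ℤ) : ℚ) / l) (k i q / l) := by
  have h_arg : ((-e i q * χ * w i q * minSum ν (weightedSum w k) i : ℤ) : ℚ) / l =
      (-(χ * (w i q * e i q * minSum ν (weightedSum w fun i q => k i q / l) i)) : ℤ) := by
    conv_lhs => rw [eq_smul_div hl, weightedSum_smul, minSum_mul_left]
    push_cast
    field_simp
  rw [h_arg, neg_one_pow_mul_genBinom, neg_neg, signedBinom]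

theorem signedBinomProd_div_eq {l : ℕ} (hl0 : l ≠ 0) (hl : ∀ i q, l ∣ k i q) :
    (signedBinomProd w e ν χ (fun i q => k i q / l) : ℚ) =
      (-1) ^ ((∑ i, ∑ q, k i q) / l) * ∏ i, ∏ q,
        genBinom (((-e i q * χ * w i q * minSum ν (weightedSum w k) i : ℤ) : ℚ) / l)
          (k i q / l) := by
  have h_exponent : (∑ i, ∑ q, k i q) / l = ∑ i, ∑ q, k i q / l := by
    rw [Nat.sum_div fun i _ => dvd_sum fun q _ => hl i q]
    exact sum_congr rfl fun i _ => Nat.sum_div fun q _ => hl i q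
  simp only [signedBinomProd, Int.cast_prod, signedBinom_div_eq w e ν _ _ hl0 hl,
    prod_mul_distrib, prod_pow_eq_pow_sum, h_exponent]

end MoebiusSum

theorem stmt_0_general {m : ℕ} {J : Fin (m + 1) → Type*} [∀ i, Fintype (J i)]
    {K : Fin (m + 1) → Finset ℕ} {k : (i : Fin (m + 1)) → J i → ℕ → ℕ}
    {a : Fin (m + 1) → ℕ} (ha : ∃ i, a i ≠ 0)
    (hsum : ∀ i, ∑ j : J i, ∑ s ∈ K i, s * k i j s = a i)
    {ν S : Fin (m + 1) → ℤ}
    (hS : ∀ i, S i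
      = (∑ j ∈ Finset.univ.filter (fun j => j < i), ν j * (a j : ℤ))
        + ν i * ∑ j ∈ Finset.univ.filter (fun j => i ≤ j), (a j : ℤ))
    (ε : (i : Fin (m + 1)) → J i → ℕ → ℤ) {χ : ℤ} (hχ : Even χ) {g₀ : ℕ}
    (hg : g₀ = Finset.univ.gcd (fun i : Fin (m + 1) =>
        Finset.univ.gcd (fun j : J i => (K i).gcd (fun s => k i j s)))) :
    ∃ c : ℤ,
      (∑ l ∈ g₀.divisors, (moebius l : ℚ) *
          (-1 : ℚ) ^ ((∑ i, ∑ j, ∑ s ∈ K i, k i j s) / l) *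
          ∏ i, ∏ j, ∏ s ∈ K i,
            genBinom (((ε i j s * χ * (s : ℤ) * S i : ℤ) : ℚ) / (l : ℚ)) (k i j s / l))
        = (c : ℚ) * (χ : ℚ) * ((S (Fin.last m) : ℤ) : ℚ) * ∑ j, (a j : ℚ) := by
  let w (i : Fin (m + 1)) (q : J i × K i) : ℤ := (q.2 : ℕ)
  let e (i : Fin (m + 1)) (q : J i × K i) : ℤ := -ε i q.1 q.2
  let k' (i : Fin (m + 1)) (q : J i × K i) : ℕ := k i q.1 q.2
  have h_weightedSum : weightedSum w k' = fun i => (a i : ℤ) := by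
    ext i
    simp only [weightedSum, w, k', Fintype.sum_prod_type, ← hsum, Nat.cast_sum, Nat.cast_mul,
      ← sum_coe_sort (K i)]
  have h_minSum : minSum ν (weightedSum w k') = S := by
    ext i
    rw [h_weightedSum, minSum_eq_sum_Iio_add, hS, filter_gt_eq_Iio, filter_le_eq_Ici]
  have h_dvd (n : ℕ) : n ∣ g₀ ↔ ∀ i q, n ∣ k' i q := by
    simp [hg, Finset.dvd_gcd_iff, k']
  have hg₀ : g₀ ≠ 0 := by
    rintro rfl
    obtain ⟨i, hi⟩ := ha
    refine hi ((hsum i).symm.trans (sum_eq_zero fun j _ => sum_eq_zero fun s hs => ?_))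
    exact mul_eq_zero_of_right s (zero_dvd_iff.mp ((h_dvd 0).mp dvd_rfl i (j, ⟨s, hs⟩)))
  obtain ⟨c, hc⟩ := modulus_dvd_sum_moebius_mul_signedBinomProd w e ν hχ h_dvd
  have h_term (l : ℕ) (hl : l ∣ g₀) :
      (signedBinomProd w e ν χ (fun i q => k' i q / l) : ℚ) =
        (-1) ^ ((∑ i, ∑ j, ∑ s ∈ K i, k i j s) / l) * ∏ i, ∏ j, ∏ s ∈ K i,
          genBinom (((ε i j s * χ * (s : ℤ) * S i : ℤ) : ℚ) / (l : ℚ)) (k i j s / l) := by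
    rw [signedBinomProd_div_eq w e ν (ne_zero_of_dvd_ne_zero hg₀ hl) ((h_dvd l).mp hl), h_minSum]
    simp only [w, e, k', neg_neg, Fintype.sum_prod_type, Fintype.prod_prod_type,
      ← sum_coe_sort (K _), ← prod_coe_sort (K _)]
  refine ⟨c, ?_⟩
  rw [modulus, h_minSum, h_weightedSum] at hc
  have hc' := congrArg (Int.cast : ℤ → ℚ) hc
  push_cast at hc'
  rw [mul_assoc, mul_assoc, mul_comm (c : ℚ), ← hc']
  exact sum_congr rfl fun l hl => by rw [h_term l (Nat.dvd_of_mem_divisors hl), mul_assoc]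

/-- Théorème 6.17 (the key integrality theorem): with
`S_i = ∑_{j<i} ν_j·a_j + ν_i·∑_{j≥i} a_j`, `χ` even, `ε_{i,j,s} ∈ {1,−1}`,
`∑_{j,s} s·k^i_{j,s} = a_i`, and `g₀ = gcd(k^i_{j,s})`, the rational number
`Q = ∑_{l ∣ g₀} μ(l)·(−1)^{(∑ k^i_{j,s})/l}·∏ binom(ε_{i,j,s}·χ·s·S_i/l, k^i_{j,s}/l)`
is an integer multiple of `χ·S_m·(∑_j a_j)`.  (The indices run over
`i ∈ Fin (m+1)` with `m ≥ 0`, so there are `m + 1 ≥ 1` values of `i` and the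
last index is `Fin.last m`.) -/
theorem stmt_0 (m : ℕ)
    (J : Fin (m + 1) → Type) [∀ i, Fintype (J i)] [∀ i, Nonempty (J i)]
    (K : Fin (m + 1) → Finset ℕ) (hK : ∀ i, (K i).Nonempty)
    (hKpos : ∀ i, ∀ s ∈ K i, 0 < s)
    (k : (i : Fin (m + 1)) → J i → ℕ → ℕ)
    (a : Fin (m + 1) → ℕ) (ha : ∀ i, 0 < a i)
    (hsum : ∀ i, ∑ j : J i, ∑ s ∈ K i, s * k i j s = a i)
    (ν : Fin (m + 1) → ℤ)
    (S : Fin (m + 1) → ℤ)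
    (hS : ∀ i, S i
      = (∑ j ∈ Finset.univ.filter (fun j => j < i), ν j * (a j : ℤ))
        + ν i * ∑ j ∈ Finset.univ.filter (fun j => i ≤ j), (a j : ℤ))
    (ε : (i : Fin (m + 1)) → J i → ℕ → ℤ)
    (hε : ∀ i j s, ε i j s = 1 ∨ ε i j s = -1)
    (χ : ℕ) (hχ : Even χ)
    (g₀ : ℕ)
    (hg : g₀ = Finset.univ.gcd (fun i : Fin (m + 1) =>
        Finset.univ.gcd (fun j : J i => (K i).gcd (fun s => k i j s)))) :
    ∃ c : ℤ,
      (∑ l ∈ g₀.divisors, (ArithmeticFunction.moebius l : ℚ) *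
          (-1 : ℚ) ^ ((∑ i, ∑ j, ∑ s ∈ K i, k i j s) / l) *
          ∏ i, ∏ j, ∏ s ∈ K i,
            genBinom (((ε i j s * (χ : ℤ) * (s : ℤ) * S i : ℤ) : ℚ) / (l : ℚ))
              (k i j s / l))
        = (c : ℚ) * (χ : ℚ) * ((S (Fin.last m) : ℤ) : ℚ) * ∑ j, (a j : ℚ) := by
  exact_mod_cast stmt_0_general ⟨0, (ha 0).ne'⟩ hsum hS ε (χ := χ) (by exact_mod_cast hχ) hg
end

section
/- Let p be a prime, m ≥ 1 and, for each i ∈ {1,…,m}, let J_i be a nonempty finite index set and K_i a nonempty finite set of positive integers, and let k^i_{j,s} ∈ ℕ be given for j ∈ J_i, s ∈ K_i. Let a_1,…,a_m be positive integers such that ∑_{j∈J_i, s∈K_i} s·k^i_{j,s} = a_i for every i. Let ν_1,…,ν_m ∈ ℤ, set S_i = ∑_{j<i} ν_j·a_j + ν_i·∑_{j≥i} a_j for 1 ≤ i ≤ m, and assume S_i ≠ 0 for all i. Let χ be an even positive integer. If p does not divide the greatest common divisor of all the k^i_{j,s}, then ∑_{i,j,s} v_p( (χ·s·|S_i|) /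 gcd(χ·s·|S_i|, k^i_{j,s}) ) ≥ v_p( χ·|S_m|·∑_{j=1}^m a_j ), where for k^i_{j,s} = 0 one uses gcd(x, 0) = x (so the corresponding factor is 1). -/
/-!
Put `B n = ∑_{j<n} ν j * a j` and `A n = ∑_{j≥n} a j`, and let `g n = gcd (B n) (A n)`. Then `S i`
equals both `B i + ν i * A i` and `B (i+1) + ν i * A (i+1)`, so `g i` and `g (i+1)` divide `S i`;
moreover any two of `g i`, `g (i+1)`, `a i` have a gcd dividing the third. At the two ends
`g 0 = ∑ j, a j`, while `g n = |S (n-1)|` for the last `n`.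

Let `U i` be the `i`-th inner sum. Since `a i = ∑ s * k`, some summand `s * k` has valuation at most
that of `a i`, and its term in `U i` alone gives `|v (g (i+1)) - v (g i)| ≤ U i`. For an index `i₀`
at which some `k` is prime to `p`, that term together with one other improves this to
`v χ + v (g i₀) + v (g (i₀+1)) ≤ U i₀`. Telescoping towards both ends from `i₀` gives the theorem.
-/

section Telescoping

variable {α : Type*} [AddCommMonoid α] [PartialOrder α] [IsOrderedAddMonoid α]

theorem le_add_sum_of_castSucc_le_succ_add {n : ℕ} {y : Fin (n + 1) → α} {U : Fin n → α}
    (h : ∀ i, y i.castSucc ≤ y i.succ + U i) : y 0 ≤ y (Fin.last n) + ∑ i, U i := by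
  induction n with
  | zero => simp
  | succ n ih =>
    calc y 0 ≤ y (Fin.last n).castSucc + ∑ i : Fin n, U i.castSucc :=
          ih (y := fun i => y i.castSucc) fun i => h i.castSucc
      _ ≤ y (Fin.last n).succ + U (Fin.last n) + ∑ i : Fin n, U i.castSucc := by
          gcongr; exact h _
      _ = y (Fin.last (n + 1)) + ∑ i, U i := by
          rw [Fin.sum_univ_castSucc, Fin.succ_last]; abel

theorem add_zero_add_last_le_sum {n : ℕ} {y : Fin (n + 1) → α} {U : Fin n → α} {c : α}
    (hle : ∀ i, y i.castSucc ≤ y i.succ + U i) (hge : ∀ i, y i.succ ≤ y i.castSucc + U i)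
    {i₀ : Fin n} (h₀ : c + y i₀.castSucc + y i₀.succ ≤ U i₀) :
    c + y 0 + y (Fin.last n) ≤ ∑ i, U i := by
  induction n with
  | zero => exact i₀.elim0
  | succ n ih =>
    rw [Fin.sum_univ_castSucc]
    cases i₀ using Fin.lastCases with
    | last =>
      calc c + y 0 + y (Fin.last (n + 1))
          ≤ c + (y (Fin.last n).castSucc + ∑ i : Fin n, U i.castSucc) + y (Fin.last (n + 1)) := by
            gcongr
            exact le_add_sum_of_castSucc_le_succ_add (y := fun i => y i.castSucc)
              fun i => hle i.castSucc
        _ = ∑ i : Fin n, U i.castSucc + (c + y (Fin.last n).castSucc + y (Fin.last n).succ) := by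
            rw [Fin.succ_last]; abel
        _ ≤ ∑ i : Fin n, U i.castSucc + U (Fin.last n) := by gcongr
    | cast j =>
      calc c + y 0 + y (Fin.last (n + 1))
          ≤ c + y 0 + (y (Fin.last n).castSucc + U (Fin.last n)) := by
            gcongr; exact hge (Fin.last n)
        _ = c + y 0 + y (Fin.last n).castSucc + U (Fin.last n) := by abel
        _ ≤ ∑ i : Fin n, U i.castSucc + U (Fin.last n) := by
            gcongr
            exact ih (y := fun i => y i.castSucc) (fun i => hle i.castSucc)
              (fun i => hge i.castSucc) h₀

end Telescoping

section Valuation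

variable {p : ℕ} [Fact p.Prime]

theorem padicValNat_le_of_dvd {m n : ℕ} (hn : n ≠ 0) (h : m ∣ n) :
    padicValNat p m ≤ padicValNat p n :=
  (padicValNat_dvd_iff_le hn).1 (pow_padicValNat_dvd.trans h)

theorem padicValNat_le_div_gcd_add {n k : ℕ} (hn : n ≠ 0) (hk : k ≠ 0) :
    padicValNat p n ≤ padicValNat p (n / n.gcd k) + padicValNat p k := by
  have hquot : n / n.gcd k ≠ 0 := (Nat.div_gcd_pos_of_pos_left k (Nat.pos_of_ne_zero hn)).ne'
  rw [← padicValNat.mul hquot hk]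
  refine padicValNat_le_of_dvd (mul_ne_zero hquot hk) ?_
  calc n = n / n.gcd k * n.gcd k := (Nat.div_mul_cancel (Nat.gcd_dvd_left n k)).symm
    _ ∣ n / n.gcd k * k := mul_dvd_mul_left _ (Nat.gcd_dvd_right n k)

theorem exists_padicValNat_le_of_not_pow_dvd_sum {ι : Type*} {P : Finset ι} {f : ι → ℕ} {e : ℕ}
    (h : ¬ p ^ (e + 1) ∣ ∑ q ∈ P, f q) : ∃ q ∈ P, f q ≠ 0 ∧ padicValNat p (f q) ≤ e := by
  contrapose! h
  refine Finset.dvd_sum fun q hq => ?_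
  by_cases hfq : f q = 0
  · exact hfq ▸ dvd_zero _
  · exact (padicValNat_dvd_iff_le hfq).2 (h q hq hfq)

end Valuation

/-- The sum of the valuations `v_p (s q * M / gcd (s q * M, k q))` over `q ∈ P`. For fixed `i` this
is the inner sum of the theorem, with `q` running over the pairs `(j, s)` and `M = χ * |S i|`. -/
def reducedValSum {ι : Type*} (p : ℕ) (P : Finset ι) (s k : ι → ℕ) (M : ℕ) : ℕ :=
  ∑ q ∈ P, padicValNat p (s q * M / (s q * M).gcd (k q))

section ReducedValSum

variable {p : ℕ} [Fact p.Prime] {ι : Type*} {P : Finset ι} {s k : ι → ℕ} {M : ℕ}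

theorem padicValNat_le_reduced_add {s k e : ℕ} (hM : M ≠ 0) (hsk : s * k ≠ 0)
    (he : padicValNat p (s * k) ≤ e) :
    padicValNat p M ≤ padicValNat p (s * M / (s * M).gcd k) + e := by
  obtain ⟨hs, hk⟩ := mul_ne_zero_iff.1 hsk
  have hreduced := padicValNat_le_div_gcd_add (p := p) (mul_ne_zero hs hM) hk
  rw [padicValNat.mul hs hM] at hreduced
  rw [padicValNat.mul hs hk] at he
  lia

theorem padicValNat_le_reducedValSum_add {e : ℕ} (hM : M ≠ 0)
    (he : ¬ p ^ (e + 1) ∣ ∑ q ∈ P, s q * k q) :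
    padicValNat p M ≤ reducedValSum p P s k M + e := by
  obtain ⟨q, hq, hne, hle⟩ := exists_padicValNat_le_of_not_pow_dvd_sum he
  calc padicValNat p M ≤ padicValNat p (s q * M / (s q * M).gcd (k q)) + e :=
        padicValNat_le_reduced_add hM hne hle
    _ ≤ reducedValSum p P s k M + e := by
        gcongr
        exact Finset.single_le_sum (f := fun q => padicValNat p (s q * M / (s q * M).gcd (k q)))
          (fun _ _ => Nat.zero_le _) hq

theorem padicValNat_add_le_reducedValSum {e : ℕ} (hM : M ≠ 0) (he : p ^ e ∣ ∑ q ∈ P, s q * k q)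
    (heM : e ≤ padicValNat p M) {q₀ : ι} (hq₀ : q₀ ∈ P) (hs₀ : s q₀ ≠ 0) (hk₀ : ¬ p ∣ k q₀) :
    padicValNat p M + e ≤ reducedValSum p P s k M := by
  classical
  have hk₀ne : k q₀ ≠ 0 := fun h => hk₀ (h ▸ dvd_zero p)
  have hk₀val : padicValNat p (k q₀) = 0 := padicValNat.eq_zero_of_not_dvd hk₀
  have hterm₀ := padicValNat_le_div_gcd_add (p := p) (mul_ne_zero hs₀ hM) hk₀ne
  rw [padicValNat.mul hs₀ hM, hk₀val] at hterm₀
  rw [reducedValSum, ← Finset.add_sum_erase P _ hq₀]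
  rcases le_or_gt e (padicValNat p (s q₀)) with hle | hlt
  · lia
  · -- `p ^ (v (s q₀) + 1)` divides the whole sum but not its `q₀` term, so not the rest either.
    have hrest : ¬ p ^ (padicValNat p (s q₀) + 1) ∣ ∑ q ∈ P.erase q₀, s q * k q := by
      intro hdvd
      have htotal := (pow_dvd_pow p hlt).trans he
      rw [← Finset.add_sum_erase P _ hq₀, Nat.dvd_add_left hdvd,
        padicValNat_dvd_iff_le (mul_ne_zero hs₀ hk₀ne), padicValNat.mul hs₀ hk₀ne] at htotal
      lia
    have hothers := padicValNat_le_reducedValSum_add hM hrest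
    rw [reducedValSum] at hothers
    lia

theorem padicValNat_le_add_reducedValSum_of_gcd_dvd {g h : ℕ} (hM : M ≠ 0) (hh : h ≠ 0)
    (hgM : g ∣ M) (hgcd : g.gcd (∑ q ∈ P, s q * k q) ∣ h) :
    padicValNat p g ≤ padicValNat p h + reducedValSum p P s k M := by
  rcases le_or_gt (padicValNat p g) (padicValNat p h) with hle | hlt
  · lia
  · have hsum : ¬ p ^ (padicValNat p h + 1) ∣ ∑ q ∈ P, s q * k q := fun hdvd =>
      pow_succ_padicValNat_not_dvd hh <|
        (Nat.dvd_gcd ((pow_dvd_pow p hlt).trans pow_padicValNat_dvd) hdvd).trans hgcd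
    calc padicValNat p g ≤ padicValNat p M := padicValNat_le_of_dvd hM hgM
      _ ≤ padicValNat p h + reducedValSum p P s k M :=
        (padicValNat_le_reducedValSum_add hM hsum).trans_eq (add_comm _ _)

theorem padicValNat_add_add_le_reducedValSum_of_gcd_dvd {c N g h : ℕ} (hc : c ≠ 0) (hN : N ≠ 0)
    (hgN : g ∣ N) (hhN : h ∣ N) (hgcd : g.gcd h ∣ ∑ q ∈ P, s q * k q)
    {q₀ : ι} (hq₀ : q₀ ∈ P) (hs₀ : s q₀ ≠ 0) (hk₀ : ¬ p ∣ k q₀) :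
    padicValNat p c + padicValNat p g + padicValNat p h ≤ reducedValSum p P s k (c * N) := by
  have hg := padicValNat_le_of_dvd (p := p) hN hgN
  have hh := padicValNat_le_of_dvd (p := p) hN hhN
  have hmul : padicValNat p (c * N) = padicValNat p c + padicValNat p N := padicValNat.mul hc hN
  have hpow : p ^ min (padicValNat p g) (padicValNat p h) ∣ ∑ q ∈ P, s q * k q :=
    (Nat.dvd_gcd ((pow_dvd_pow p (min_le_left _ _)).trans pow_padicValNat_dvd)
      ((pow_dvd_pow p (min_le_right _ _)).trans pow_padicValNat_dvd)).trans hgcd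
  have hsum := padicValNat_add_le_reducedValSum (mul_ne_zero hc hN) hpow (by lia) hq₀ hs₀ hk₀
  lia

end ReducedValSum

section PivotSum

/-- The sum of the terms of `f` strictly before the cut `c`; the `n + 1` cuts are indexed so that
`i.castSucc` lies just before `i` and `i.succ` just after it. -/
def headSum {n : ℕ} (f : Fin n → ℤ) (c : Fin (n + 1)) : ℤ :=
  ∑ j with j.castSucc < c, f j

/-- The sum of the terms of `f` after the cut `c`, complementary to `headSum f c`. -/
def tailSum {n : ℕ} (f : Fin n → ℤ) (c : Fin (n + 1)) : ℤ :=
  ∑ j with c ≤ j.castSucc, f j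

/-- The integer `S i` of the theorem: the `ν`-weighted sum of `a`, with the weights kept equal
to `ν i` from the index `i` onwards. -/
def pivotSum {n : ℕ} (ν a : Fin n → ℤ) (i : Fin n) : ℤ :=
  ∑ j with j < i, ν j * a j + ν i * ∑ j with i ≤ j, a j

/-- The gcd of the weighted sum of `a` before the cut `c` and the unweighted sum after it. Its
valuation is the quantity that telescopes along the cuts. -/
def splitGcd {n : ℕ} (ν a : Fin n → ℤ) (c : Fin (n + 1)) : ℕ :=
  Int.gcd (headSum (fun j => ν j * a j) c) (tailSum a c)

variable {n : ℕ}

theorem headSum_zero (f : Fin n → ℤ) : headSum f 0 = 0 := by simp [headSum]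

theorem headSum_succ (f : Fin n → ℤ) (i : Fin n) :
    headSum f i.succ = headSum f i.castSucc + f i := by
  have hinsert : Finset.univ.filter (fun j : Fin n => j.castSucc < i.succ)
      = insert i (Finset.univ.filter fun j => j.castSucc < i.castSucc) := by
    ext j; simp [Fin.castSucc_lt_succ_iff, le_iff_eq_or_lt]
  rw [headSum, hinsert, Finset.sum_insert (by simp), add_comm, headSum]

theorem tailSum_zero (f : Fin n → ℤ) : tailSum f 0 = ∑ j, f j := by simp [tailSum]

theorem tailSum_last (f : Fin n → ℤ) : tailSum f (Fin.last n) = 0 := by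
  simp [tailSum, (Fin.castSucc_lt_last _).not_ge]

theorem tailSum_castSucc (f : Fin n → ℤ) (i : Fin n) :
    tailSum f i.castSucc = tailSum f i.succ + f i := by
  have hinsert : Finset.univ.filter (fun j : Fin n => i.castSucc ≤ j.castSucc)
      = insert i (Finset.univ.filter fun j => i.succ ≤ j.castSucc) := by
    ext j; simp [Fin.succ_le_castSucc_iff, le_iff_eq_or_lt (a := i), eq_comm]
  rw [tailSum, hinsert, Finset.sum_insert (by simp), add_comm, tailSum]

variable (ν a : Fin n → ℤ) (i : Fin n)

theorem pivotSum_eq_castSucc :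
    pivotSum ν a i = headSum (fun j => ν j * a j) i.castSucc + ν i * tailSum a i.castSucc := by
  simp [pivotSum, headSum, tailSum]

theorem pivotSum_eq_succ :
    pivotSum ν a i = headSum (fun j => ν j * a j) i.succ + ν i * tailSum a i.succ := by
  rw [pivotSum_eq_castSucc, headSum_succ, tailSum_castSucc]
  ring

theorem splitGcd_castSucc_dvd_natAbs_pivotSum :
    splitGcd ν a i.castSucc ∣ (pivotSum ν a i).natAbs := by
  rw [← Int.natCast_dvd, pivotSum_eq_castSucc]
  exact dvd_add (Int.gcd_dvd_left _ _) ((Int.gcd_dvd_right _ _).mul_left _)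

theorem splitGcd_succ_dvd_natAbs_pivotSum :
    splitGcd ν a i.succ ∣ (pivotSum ν a i).natAbs := by
  rw [← Int.natCast_dvd, pivotSum_eq_succ]
  exact dvd_add (Int.gcd_dvd_left _ _) ((Int.gcd_dvd_right _ _).mul_left _)

theorem dvd_splitGcd_iff {d : ℕ} {c : Fin (n + 1)} :
    d ∣ splitGcd ν a c ↔ (d : ℤ) ∣ headSum (fun j => ν j * a j) c ∧ (d : ℤ) ∣ tailSum a c :=
  Int.dvd_gcd_iff

theorem dvd_splitGcd_succ_iff {d : ℕ} (hd : d ∣ (a i).natAbs) :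
    d ∣ splitGcd ν a i.succ ↔ d ∣ splitGcd ν a i.castSucc := by
  rw [← Int.natCast_dvd] at hd
  rw [dvd_splitGcd_iff, dvd_splitGcd_iff, headSum_succ, tailSum_castSucc,
    dvd_add_left (hd.mul_left _), dvd_add_left hd]

theorem gcd_splitGcd_castSucc_dvd_splitGcd_succ :
    (splitGcd ν a i.castSucc).gcd (a i).natAbs ∣ splitGcd ν a i.succ :=
  (dvd_splitGcd_succ_iff ν a i (Nat.gcd_dvd_right _ _)).2 (Nat.gcd_dvd_left _ _)

theorem gcd_splitGcd_succ_dvd_splitGcd_castSucc :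
    (splitGcd ν a i.succ).gcd (a i).natAbs ∣ splitGcd ν a i.castSucc :=
  (dvd_splitGcd_succ_iff ν a i (Nat.gcd_dvd_right _ _)).1 (Nat.gcd_dvd_left _ _)

theorem gcd_splitGcd_castSucc_succ_dvd_natAbs :
    (splitGcd ν a i.castSucc).gcd (splitGcd ν a i.succ) ∣ (a i).natAbs := by
  set d := (splitGcd ν a i.castSucc).gcd (splitGcd ν a i.succ)
  have hcastSucc : (d : ℤ) ∣ tailSum a i.castSucc :=
    ((dvd_splitGcd_iff ν a).1 (Nat.gcd_dvd_left _ _)).2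
  have hsucc : (d : ℤ) ∣ tailSum a i.succ :=
    ((dvd_splitGcd_iff ν a).1 (Nat.gcd_dvd_right _ _)).2
  rw [tailSum_castSucc, dvd_add_right hsucc] at hcastSucc
  exact Int.natCast_dvd.1 hcastSucc

theorem splitGcd_zero : splitGcd ν a 0 = (∑ j, a j).natAbs := by
  rw [splitGcd, headSum_zero, tailSum_zero, Int.gcd_zero_left]

theorem splitGcd_last {m : ℕ} (ν a : Fin (m + 1) → ℤ) :
    splitGcd ν a (Fin.last (m + 1)) = (pivotSum ν a (Fin.last m)).natAbs := by
  rw [splitGcd, pivotSum_eq_succ, Fin.succ_last, tailSum_last, mul_zero, add_zero,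
    Int.gcd_zero_right]

end PivotSum

theorem padicValNat_mul_natAbs_pivotSum_mul_sum_le {p : ℕ} [Fact p.Prime] {m : ℕ}
    {ι : Fin (m + 1) → Type*} {P : ∀ i, Finset (ι i)} {s k : ∀ i, ι i → ℕ}
    (hs : ∀ i, ∀ q ∈ P i, s i q ≠ 0) {a : Fin (m + 1) → ℕ}
    (ha : ∀ i, ∑ q ∈ P i, s i q * k i q = a i) {ν : Fin (m + 1) → ℤ}
    (hne : ∀ i, pivotSum ν (fun j => a j) i ≠ 0) {χ : ℕ} (hχ : χ ≠ 0)
    (hk : ∃ i, ∃ q ∈ P i, ¬ p ∣ k i q) :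
    padicValNat p (χ * (pivotSum ν (fun j => a j) (Fin.last m)).natAbs * ∑ j, a j)
      ≤ ∑ i, reducedValSum p (P i) (s i) (k i) (χ * (pivotSum ν (fun j => a j) i).natAbs) := by
  obtain ⟨i₀, q₀, hq₀, hk₀⟩ := hk
  let g : Fin (m + 2) → ℕ := splitGcd ν fun j => a j
  let N : Fin (m + 1) → ℕ := fun i => (pivotSum ν (fun j => a j) i).natAbs
  have hN : ∀ i, N i ≠ 0 := fun i => Int.natAbs_ne_zero.2 (hne i)
  have hχN : ∀ i, χ * N i ≠ 0 := fun i => mul_ne_zero hχ (hN i)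
  have hdvd : ∀ i, g i.castSucc ∣ N i := splitGcd_castSucc_dvd_natAbs_pivotSum ν _
  have hdvd' : ∀ i, g i.succ ∣ N i := splitGcd_succ_dvd_natAbs_pivotSum ν _
  have hg : ∀ i : Fin (m + 1), g i.castSucc ≠ 0 := fun i => ne_zero_of_dvd_ne_zero (hN i) (hdvd i)
  have hg' : ∀ i : Fin (m + 1), g i.succ ≠ 0 := fun i => ne_zero_of_dvd_ne_zero (hN i) (hdvd' i)
  have hzero : g 0 = ∑ j, a j := by
    rw [show g 0 = _ from splitGcd_zero ν _, ← Nat.cast_sum, Int.natAbs_natCast]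
  have hlast : g (Fin.last (m + 1)) = N (Fin.last m) := splitGcd_last ν _
  have htelescope := add_zero_add_last_le_sum (c := padicValNat p χ)
    (y := fun c => padicValNat p (g c))
    (U := fun i => reducedValSum p (P i) (s i) (k i) (χ * N i))
    (fun i => padicValNat_le_add_reducedValSum_of_gcd_dvd (hχN i) (hg' i) ((hdvd i).mul_left χ)
      (ha i ▸ gcd_splitGcd_castSucc_dvd_splitGcd_succ ν _ i))
    (fun i => padicValNat_le_add_reducedValSum_of_gcd_dvd (hχN i) (hg i) ((hdvd' i).mul_left χ)
      (ha i ▸ gcd_splitGcd_succ_dvd_splitGcd_castSucc ν _ i))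
    (padicValNat_add_add_le_reducedValSum_of_gcd_dvd hχ (hN i₀) (hdvd i₀) (hdvd' i₀)
      (ha i₀ ▸ gcd_splitGcd_castSucc_succ_dvd_natAbs ν _ i₀) hq₀ (hs i₀ q₀ hq₀) hk₀)
  calc padicValNat p (χ * N (Fin.last m) * ∑ j, a j)
      = padicValNat p χ + padicValNat p (g 0) + padicValNat p (g (Fin.last (m + 1))) := by
        have hsum : ∑ j, a j ≠ 0 := hzero ▸ hg 0
        rw [padicValNat.mul (hχN _) hsum, padicValNat.mul hχ (hN _), hzero, hlast, add_right_comm]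
    _ ≤ ∑ i, reducedValSum p (P i) (s i) (k i) (χ * N i) := htelescope

theorem stmt_1_general (p : ℕ) (hp : p.Prime) (m : ℕ)
    (J : Fin (m + 1) → Type*) [∀ i, Fintype (J i)]
    (K : Fin (m + 1) → Finset ℕ) (hKpos : ∀ i, ∀ s ∈ K i, 0 < s)
    (k : (i : Fin (m + 1)) → J i → ℕ → ℕ)
    (a : Fin (m + 1) → ℕ) (hsum : ∀ i, ∑ j : J i, ∑ s ∈ K i, s * k i j s = a i)
    (ν : Fin (m + 1) → ℤ)
    (S : Fin (m + 1) → ℤ)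
    (hS : ∀ i, S i
      = (∑ j ∈ Finset.univ.filter (fun j => j < i), ν j * (a j : ℤ))
        + ν i * ∑ j ∈ Finset.univ.filter (fun j => i ≤ j), (a j : ℤ))
    (hSne : ∀ i, S i ≠ 0)
    (χ : ℕ) (hχpos : 0 < χ)
    (hp' : ¬ p ∣ Finset.univ.gcd (fun i : Fin (m + 1) =>
        Finset.univ.gcd (fun j : J i => (K i).gcd (fun s => k i j s)))) :
    padicValNat p (χ * (S (Fin.last m)).natAbs * ∑ j, a j)
      ≤ ∑ i, ∑ j, ∑ s ∈ K i,
          padicValNat p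
            ((χ * s * (S i).natAbs) / Nat.gcd (χ * s * (S i).natAbs) (k i j s)) := by
  have : Fact p.Prime := ⟨hp⟩
  obtain rfl : S = pivotSum ν fun j => a j := funext hS
  have hk : ∃ i, ∃ q ∈ (Finset.univ : Finset (J i)) ×ˢ K i, ¬ p ∣ k i q.1 q.2 := by
    simpa [Finset.dvd_gcd_iff] using hp'
  have hbound := padicValNat_mul_natAbs_pivotSum_mul_sum_le (s := fun _ q => q.2)
    (fun i q hq => (hKpos i q.2 (Finset.mem_product.1 hq).2).ne')
    (fun i => (Finset.sum_product ..).trans (hsum i)) hSne hχpos.ne' hk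
  simpa only [reducedValSum, Finset.sum_product, mul_left_comm _ χ, ← mul_assoc χ] using hbound

/-- Lemme 6.19 (the key p-adic estimate): with
`S_i = ∑_{j<i} ν_j·a_j + ν_i·∑_{j≥i} a_j` all nonzero, `χ` even and positive,
and `∑_{j,s} s·k^i_{j,s} = a_i`, if the prime `p` does not divide
`gcd(k^i_{j,s})`, then
`∑_{i,j,s} v_p((χ·s·|S_i|)/gcd(χ·s·|S_i|, k^i_{j,s})) ≥ v_p(χ·|S_m|·∑_j a_j)`.
(The indices run over `i ∈ Fin (m+1)` with `m ≥ 0`, so there are `m + 1 ≥ 1`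
values of `i` and the last index is `Fin.last m`.) -/
theorem stmt_1 (p : ℕ) (hp : p.Prime) (m : ℕ)
    (J : Fin (m + 1) → Type) [∀ i, Fintype (J i)] [∀ i, Nonempty (J i)]
    (K : Fin (m + 1) → Finset ℕ) (hK : ∀ i, (K i).Nonempty)
    (hKpos : ∀ i, ∀ s ∈ K i, 0 < s)
    (k : (i : Fin (m + 1)) → J i → ℕ → ℕ)
    (a : Fin (m + 1) → ℕ) (ha : ∀ i, 0 < a i)
    (hsum : ∀ i, ∑ j : J i, ∑ s ∈ K i, s * k i j s = a i)
    (ν : Fin (m + 1) → ℤ)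
    (S : Fin (m + 1) → ℤ)
    (hS : ∀ i, S i
      = (∑ j ∈ Finset.univ.filter (fun j => j < i), ν j * (a j : ℤ))
        + ν i * ∑ j ∈ Finset.univ.filter (fun j => i ≤ j), (a j : ℤ))
    (hSne : ∀ i, S i ≠ 0)
    (χ : ℕ) (hχeven : Even χ) (hχpos : 0 < χ)
    (hp' : ¬ p ∣ Finset.univ.gcd (fun i : Fin (m + 1) =>
        Finset.univ.gcd (fun j : J i => (K i).gcd (fun s => k i j s)))) :
    padicValNat p (χ * (S (Fin.last m)).natAbs * ∑ j, a j)
      ≤ ∑ i, ∑ j, ∑ s ∈ K i,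
          padicValNat p
            ((χ * s * (S i).natAbs) / Nat.gcd (χ * s * (S i).natAbs) (k i j s)) :=
  stmt_1_general p hp m J K hKpos k a hsum ν S hS hSne χ hχpos hp'
end

section
/- For all positive integers n and m, the integer n / gcd(n, m) divides the binomial coefficient C(n, m) (with the convention C(n, m) = 0 when m > n). -/
theorem dvd_mul_choose (n m : ℕ) : n ∣ m * n.choose m := by
  rcases m with _ | m
  · simp
  rcases n with _ | n
  · simp
  calc
    n + 1 ∣ (n + 1) * n.choose m := dvd_mul_right _ _
    _ = (m + 1) * (n + 1).choose (m + 1) := by rw [Nat.add_one_mul_choose_eq, mul_comm]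

theorem div_gcd_dvd_iff_dvd_mul {n m : ℕ} (hgcd : 0 < n.gcd m) (k : ℕ) :
    n / n.gcd m ∣ k ↔ n ∣ m * k := by
  rw [Nat.div_dvd_iff_dvd_mul (Nat.gcd_dvd_left n m) hgcd, Nat.dvd_gcd_mul_iff_dvd_mul]

/-- Lemme 6.16: for positive integers `n` and `m`, `n / gcd(n, m)` divides `C(n, m)`. -/
theorem stmt_2 (n m : ℕ) (hn : 0 < n) (hm : 0 < m) :
    n / Nat.gcd n m ∣ Nat.choose n m :=
  (div_gcd_dvd_iff_dvd_mul (Nat.gcd_pos_of_pos_left m hn) _).mpr (dvd_mul_choose n m)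
end

section
/- Let r ≥ 1 and let y_{ij} = y_{ji} ∈ ℂ be given for all 1 ≤ i ≠ j ≤ r. Let A be the r×r complex matrix with A_{ij} = −y_{ij} for i ≠ j and A_{ii} = ∑_{j≠i} y_{ij} (so that every row of A sums to zero). Then trace(adjugate A) = r · ∑_T ∏_{{i,j}∈T} y_{ij}, where T ranges over all spanning trees of the complete graph on the vertex set {1,…,r}; equivalently, each principal cofactor of A, and their average κ(A) = trace(adjugate A)/r, equals the spanning-tree generating polynomial ∑_T ∏_{{i,j}∈T} y_{ij}. -/
open scoped Classical in
/-- The generating polynomial of spanning trees of the complete graph on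
`Fin r`, with edge weights `w`: a spanning tree is a set of `r − 1` unordered
pairs of distinct vertices whose associated graph is connected. -/
noncomputable def treeSum (r : ℕ) (w : Sym2 (Fin r) → ℂ) : ℂ :=
  ∑ T ∈ Finset.univ.filter
      (fun T : Finset (Sym2 (Fin r)) =>
        (∀ e ∈ T, ¬ e.IsDiag) ∧
          (SimpleGraph.fromEdgeSet (↑T : Set (Sym2 (Fin r)))).Connected ∧
          T.card = r - 1),
    ∏ e ∈ T, w e

/-!
The cofactor at `o` is the determinant of the Laplacian with row `o` replaced by `e_o`. Row `i ≠ o`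
of the Laplacian is `∑ j, w i j • (e_i - e_j)`, so multilinearity expands this determinant over the
self-maps `f` fixing `o`, the term of `f` being `∏ i ≠ o, w i (f i)` times the determinant of the
matrix with rows `e_o` and `e_i - e_{f i}`. That determinant is `1` if `f` leads every vertex to `o`
(order the vertices by depth: the matrix is unitriangular), and `0` otherwise. Forgetting the
orientation is then a bijection, weight-preserving by symmetry of `w`, from the maps that lead every
vertex to `o` onto the spanning trees.
-/

variable {V R : Type*}

/-- `f` is the parent map of a tree on `V` rooted at `o`: every vertex reaches `o` under iteration
of `f`. Parent maps encode spanning trees with all edges directed towards `o`; by convention the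
root is its own parent. -/
structure IsParentMap (o : V) (f : V → V) : Prop where
  apply_root : f o = o
  exists_iterate_eq_root : ∀ i, ∃ n, f^[n] i = o

theorem isParentMap_iff_exists_depth {o : V} {f : V → V} :
    IsParentMap o f ↔ f o = o ∧ ∃ depth : V → ℕ, ∀ i ≠ o, depth (f i) < depth i := by
  classical
  constructor
  · refine fun hf =>
      ⟨hf.apply_root, fun i => Nat.find (hf.exists_iterate_eq_root i), fun i hi => ?_⟩
    obtain ⟨n, hn⟩ : ∃ n, Nat.find (hf.exists_iterate_eq_root i) = n + 1 :=
      Nat.exists_eq_succ_of_ne_zero fun h => hi ((Nat.find_eq_zero _).1 h)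
    have hroot : f^[n] (f i) = o := by
      simpa only [hn, Function.iterate_succ_apply] using
        Nat.find_spec (hf.exists_iterate_eq_root i)
    exact (Nat.find_min' _ hroot).trans_lt (n.lt_succ_self.trans_eq hn.symm)
  · rintro ⟨ho, depth, hdepth⟩
    refine ⟨ho, fun i => ?_⟩
    induction hi : depth i using Nat.strong_induction_on generalizing i with
    | _ d ih =>
      by_cases hio : i = o
      · exact ⟨0, hio⟩
      · obtain ⟨n, hn⟩ := ih _ (hi ▸ hdepth i hio) (f i) rfl
        exact ⟨n + 1, hn⟩

/-- The graph underlying a self-map `f`, whose edges join each vertex `i` to `f i`, fixed points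
being ignored. It turns a parent map into the corresponding unrooted tree. -/
def functionalGraph (f : V → V) : SimpleGraph V :=
  SimpleGraph.fromRel fun i j => f i = j

theorem functionalGraph_adj {f : V → V} {i j : V} :
    (functionalGraph f).Adj i j ↔ i ≠ j ∧ (f i = j ∨ f j = i) :=
  Iff.rfl

namespace IsParentMap

variable {o : V} {f g : V → V}

theorem induction {p : V → Prop} (hf : IsParentMap o f) (root : p o)
    (step : ∀ i ≠ o, p (f i) → p i) (i : V) : p i := by
  obtain ⟨n, hn⟩ := hf.exists_iterate_eq_root i
  induction n generalizing i with
  | zero => exact (show i = o from hn) ▸ root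
  | succ n ih =>
    by_cases hio : i = o
    · exact hio ▸ root
    · exact step i hio (ih (f i) hn)

theorem apply_apply_ne (hf : IsParentMap o f) {i : V} (hi : i ≠ o) : f (f i) ≠ i := by
  obtain ⟨ho, depth, hdepth⟩ := isParentMap_iff_exists_depth.1 hf
  by_cases hfi : f i = o
  · rw [hfi, ho]
    exact hi.symm
  · exact fun h => absurd ((hdepth _ hfi).trans (hdepth i hi)) (by rw [h]; exact lt_irrefl _)

theorem apply_ne (hf : IsParentMap o f) {i : V} (hi : i ≠ o) : f i ≠ i :=
  fun h => hf.apply_apply_ne hi (by rw [h, h])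

theorem functionalGraph_adj_apply (hf : IsParentMap o f) {i : V} (hi : i ≠ o) :
    (functionalGraph f).Adj i (f i) :=
  functionalGraph_adj.2 ⟨(hf.apply_ne hi).symm, .inl rfl⟩

theorem functionalGraph_connected (hf : IsParentMap o f) : (functionalGraph f).Connected :=
  (functionalGraph f).connected_iff_exists_forall_reachable.2 ⟨o, hf.induction .rfl
    fun _ hi hreach => hreach.trans (hf.functionalGraph_adj_apply hi).reachable.symm⟩

theorem injOn_edge (hf : IsParentMap o f) : Set.InjOn (fun i => s(i, f i)) {o}ᶜ := by
  intro i hi j _ hij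
  rcases Sym2.eq_iff.1 hij with ⟨hij, -⟩ | ⟨hij, hfij⟩
  · exact hij
  · exact absurd (by rw [hfij, ← hij]) (hf.apply_apply_ne hi)

theorem edgeSet_functionalGraph (hf : IsParentMap o f) :
    (functionalGraph f).edgeSet = (fun i => s(i, f i)) '' {o}ᶜ := by
  ext e
  constructor
  · induction e with
    | _ i j =>
      have ne_root {a b : V} (hab : a ≠ b) (h : f a = b) : a ≠ o := by
        rintro rfl
        exact hab (hf.apply_root.symm.trans h)
      rintro ⟨hij, h | h⟩
      · exact ⟨i, ne_root hij h, congrArg (s(i, ·)) h⟩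
      · exact ⟨j, ne_root hij.symm h, (congrArg (s(j, ·)) h).trans Sym2.eq_swap⟩
  · rintro ⟨i, hi, rfl⟩
    exact hf.functionalGraph_adj_apply hi

theorem edgeFinset_functionalGraph [Fintype V] [DecidableEq V]
    [Fintype (functionalGraph f).edgeSet] (hf : IsParentMap o f) :
    (functionalGraph f).edgeFinset = ({o}ᶜ : Finset V).image fun i => s(i, f i) := by
  rw [← Finset.coe_inj, SimpleGraph.coe_edgeFinset, hf.edgeSet_functionalGraph]
  simp

theorem prod_edgeFinset_functionalGraph [Fintype V] [DecidableEq V] [CommMonoid R]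
    [Fintype (functionalGraph f).edgeSet] (hf : IsParentMap o f) (w : Sym2 V → R) :
    ∏ e ∈ (functionalGraph f).edgeFinset, w e = ∏ i ∈ {o}ᶜ, w s(i, f i) := by
  rw [hf.edgeFinset_functionalGraph, Finset.prod_image]
  simpa using hf.injOn_edge

theorem functionalGraph_isTree [Finite V] (hf : IsParentMap o f) :
    (functionalGraph f).IsTree := by
  refine SimpleGraph.isTree_iff_connected_and_card.2 ⟨hf.functionalGraph_connected, ?_⟩
  rw [hf.edgeSet_functionalGraph, Nat.card_image_of_injOn hf.injOn_edge, Nat.card_coe_set_eq,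
    ← Set.ncard_singleton o, add_comm, Set.ncard_add_ncard_compl]

/-- The edge from `i` to `f i` joins `i` to `g i`: otherwise `g (f i) = i`, whereas induction from
the root gives `g (f i) = f (f i)`, and a parent map has no 2-cycle. -/
theorem eq_of_functionalGraph_eq (hf : IsParentMap o f) (hg : IsParentMap o g)
    (hfg : functionalGraph f = functionalGraph g) : f = g := by
  refine funext (hf.induction (hf.apply_root.trans hg.apply_root.symm) fun i hi ih => ?_)
  have hadj : (functionalGraph g).Adj i (f i) := hfg ▸ hf.functionalGraph_adj_apply hi
  rcases hadj.2 with h | h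
  · exact h.symm
  · exact absurd (ih.trans h) (hf.apply_apply_ne hi)

end IsParentMap

theorem exists_adj_dist_lt {G : SimpleGraph V} (hG : G.Connected) {i o : V} (hi : i ≠ o) :
    ∃ j, G.Adj i j ∧ G.dist j o < G.dist i o := by
  obtain ⟨p, hp⟩ := hG.exists_walk_length_eq_dist i o
  cases p with
  | nil => exact absurd rfl hi
  | cons hadj q => exact ⟨_, hadj, hp ▸ Nat.lt_succ_of_le (SimpleGraph.dist_le q)⟩

theorem exists_isParentMap_functionalGraph_le {G : SimpleGraph V} (hG : G.Connected) (o : V) :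
    ∃ f, IsParentMap o f ∧ functionalGraph f ≤ G := by
  classical
  choose! parent hadj hdist using fun i (hi : i ≠ o) => exists_adj_dist_lt hG hi
  have hne {i : V} (hi : i ≠ o) : Function.update parent o o i = parent i :=
    Function.update_of_ne hi _ _
  refine ⟨Function.update parent o o, isParentMap_iff_exists_depth.2
    ⟨Function.update_self .., (G.dist · o), fun i hi => hne hi ▸ hdist i hi⟩, ?_⟩
  have adj_of_apply_eq {i j : V} (hij : i ≠ j) (h : Function.update parent o o i = j) :
      G.Adj i j := by
    have hi : i ≠ o := by
      rintro rfl
      exact hij (by simpa using h)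
    exact h ▸ hne hi ▸ hadj i hi
  rintro i j ⟨hij, h | h⟩
  · exact adj_of_apply_eq hij h
  · exact (adj_of_apply_eq hij.symm h).symm

theorem exists_isParentMap_functionalGraph_eq {G : SimpleGraph V} (hG : G.IsTree) (o : V) :
    ∃ f, IsParentMap o f ∧ functionalGraph f = G := by
  obtain ⟨f, hf, hle⟩ := exists_isParentMap_functionalGraph_le hG.connected o
  exact ⟨f, hf, (SimpleGraph.isTree_iff_minimal_connected.1 hG).eq_of_le
    hf.functionalGraph_connected hle⟩

open scoped Classical in
/-- The generating polynomial of the trees with vertex set `V`: each tree contributes the product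
of the weights of its edges. -/
noncomputable def spanningTreeSum [Fintype V] [CommSemiring R] (w : Sym2 V → R) : R :=
  ∑ G : SimpleGraph V with G.IsTree, ∏ e ∈ G.edgeFinset, w e

open scoped Classical in
theorem sum_isParentMap_eq_spanningTreeSum [Fintype V] [DecidableEq V] [CommSemiring R]
    (w : Sym2 V → R) (o : V) :
    ∑ f : V → V with IsParentMap o f, ∏ i ∈ {o}ᶜ, w s(i, f i) = spanningTreeSum w := by
  refine Finset.sum_bij (fun f _ => functionalGraph f) (fun f hf => ?_) (fun f hf g hg => ?_)
    (fun G hG => ?_) fun f hf => ?_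
  all_goals simp only [Finset.mem_filter_univ] at *
  · exact hf.functionalGraph_isTree
  · exact hf.eq_of_functionalGraph_eq hg
  · simpa only [exists_prop] using exists_isParentMap_functionalGraph_eq hG o
  · exact (hf.prod_edgeFinset_functionalGraph w).symm

theorem isTree_iff_connected_and_card_edgeFinset_eq_sub_one [Fintype V] (G : SimpleGraph V)
    [Fintype G.edgeSet] :
    G.IsTree ↔ G.Connected ∧ G.edgeFinset.card = Fintype.card V - 1 := by
  rw [SimpleGraph.isTree_iff_connected_and_card, Nat.card_eq_fintype_card,
    Nat.card_eq_fintype_card, ← SimpleGraph.edgeFinset_card]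
  refine and_congr_right fun hG => ?_
  have hV : 0 < Fintype.card V := Fintype.card_pos_iff.2 hG.nonempty
  lia

theorem edgeFinset_fromEdgeSet_coe {T : Finset (Sym2 V)}
    {_ : Fintype (SimpleGraph.fromEdgeSet (T : Set (Sym2 V))).edgeSet}
    (hT : ∀ e ∈ T, ¬e.IsDiag) :
    (SimpleGraph.fromEdgeSet (T : Set (Sym2 V))).edgeFinset = T := by
  ext e
  simpa using hT e

theorem treeSum_eq_spanningTreeSum (r : ℕ) (w : Sym2 (Fin r) → ℂ) :
    treeSum r w = spanningTreeSum w := by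
  classical
  refine Finset.sum_bij' (fun T _ => SimpleGraph.fromEdgeSet T) (fun G _ => G.edgeFinset)
    (fun T hT => ?_) (fun G hG => ?_) (fun T hT => ?_) (fun G _ => ?_) fun T hT => ?_
  all_goals simp only [Finset.mem_filter_univ,
    isTree_iff_connected_and_card_edgeFinset_eq_sub_one, Fintype.card_fin] at *
  · rw [edgeFinset_fromEdgeSet_coe hT.1]
    exact hT.2
  · refine ⟨fun e he => G.not_isDiag_of_mem_edgeFinset he, ?_⟩
    simpa using hG
  · exact edgeFinset_fromEdgeSet_coe hT.1
  · simp
  · rw [edgeFinset_fromEdgeSet_coe hT.1]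

variable [DecidableEq V] [CommRing R]

/-- The matrix with rows `e_i - e_{f i}` for `i ≠ o` and row `e_o` at `o`. These are the matrices
into which the Laplacian with row `o` replaced by `e_o` decomposes by multilinearity. -/
def parentMatrix (R : Type*) [CommRing R] (o : V) (f : V → V) : Matrix V V R :=
  Matrix.of fun i => if i = o then Pi.single o 1 else Pi.single i 1 - Pi.single (f i) 1

theorem parentMatrix_apply_self (o : V) (f : V → V) : parentMatrix R o f o = Pi.single o 1 :=
  if_pos rfl

theorem parentMatrix_apply_of_ne {o i : V} (f : V → V) (hi : i ≠ o) :
    parentMatrix R o f i = Pi.single i 1 - Pi.single (f i) 1 :=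
  if_neg hi

theorem parentMatrix_diag {o : V} {f : V → V} (hf : IsParentMap o f) (i : V) :
    parentMatrix R o f i i = 1 := by
  by_cases hi : i = o
  · simp [hi, parentMatrix_apply_self]
  · simp [parentMatrix_apply_of_ne f hi, hf.apply_ne hi]

variable [Fintype V]

theorem det_parentMatrix_of_isParentMap {o : V} {f : V → V} (hf : IsParentMap o f) :
    (parentMatrix R o f).det = 1 := by
  obtain ⟨-, depth, hdepth⟩ := isParentMap_iff_exists_depth.1 hf
  have apply_of_ne {i j : V} (hij : i ≠ j) (hle : depth i ≤ depth j) :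
      parentMatrix R o f i j = 0 := by
    by_cases hi : i = o
    · subst hi
      rw [parentMatrix_apply_self, Pi.single_eq_of_ne' hij]
    · have hfij : f i ≠ j := fun h => ((hdepth i hi).trans_le hle).ne (congrArg depth h)
      simp [parentMatrix_apply_of_ne f hi, hij, hfij]
  have htri : (parentMatrix R o f).BlockTriangular (OrderDual.toDual ∘ depth) :=
    fun i j hlt => apply_of_ne (fun h => hlt.ne (h ▸ rfl)) hlt.le
  have hblock (d : ℕᵒᵈ) :
      (parentMatrix R o f).toSquareBlock (OrderDual.toDual ∘ depth) d = 1 := by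
    ext i j
    by_cases hij : i = j
    · rw [hij, Matrix.one_apply_eq]
      exact parentMatrix_diag hf j
    · rw [Matrix.one_apply_ne hij]
      exact apply_of_ne (Subtype.coe_injective.ne hij) (i.2.trans j.2.symm).ge
  simp only [htri.det, hblock, Matrix.det_one, Finset.prod_const_one]

/-- The indicator vector of the vertices that never reach `o` lies in the kernel. -/
theorem det_parentMatrix_eq_zero {o i : V} {f : V → V} (hi : ∀ n, f^[n] i ≠ o) :
    (parentMatrix R o f).det = 0 := by
  classical
  let v : V → R := fun k => if ∃ n, f^[n] k = o then 0 else 1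
  have hvo : v o = 0 := if_pos ⟨0, rfl⟩
  have hvi : v i = 1 := if_neg (not_exists.2 hi)
  have hvf {k : V} (hk : k ≠ o) : v (f k) = v k := by
    have hiff : (∃ n, f^[n] (f k) = o) ↔ ∃ n, f^[n] k = o :=
      ⟨fun ⟨n, hn⟩ => ⟨n + 1, hn⟩, fun ⟨n, hn⟩ => by
        cases n with
        | zero => exact absurd hn hk
        | succ n => exact ⟨n, hn⟩⟩
    simp only [v, hiff]
  have hker : (parentMatrix R o f).mulVec v = 0 := by
    ext k
    by_cases hk : k = o
    · simp [hk, Matrix.mulVec, parentMatrix_apply_self, hvo]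
    · rw [Matrix.mulVec, parentMatrix_apply_of_ne f hk, sub_dotProduct]
      simp [hvf hk]
  exact Matrix.det_eq_zero_of_mulVec_eq_zero_of_mem_nonZeroDivisors hker (i := i) (by simp [hvi])

open scoped Classical in
theorem det_parentMatrix {o : V} {f : V → V} (ho : f o = o) :
    (parentMatrix R o f).det = if IsParentMap o f then 1 else 0 := by
  split_ifs with hf
  · exact det_parentMatrix_of_isParentMap hf
  · obtain ⟨i, hi⟩ : ∃ i, ∀ n, f^[n] i ≠ o := by
      by_contra! h
      exact hf ⟨ho, h⟩
    exact det_parentMatrix_eq_zero hi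

/-- The Laplacian of the complete digraph on `V` in which the arc from `i` to `j` has weight
`w i j`. Loops do not contribute, since `w i i` cancels. -/
def weightedLaplacian (w : V → V → R) : Matrix V V R :=
  Matrix.diagonal (fun i => ∑ j, w i j) - Matrix.of w

theorem weightedLaplacian_apply (w : V → V → R) (i j : V) :
    weightedLaplacian w i j = if i = j then ∑ l with l ≠ i, w i l else -w i j := by
  split_ifs with hij
  · subst hij
    simp [weightedLaplacian, Finset.filter_ne', Finset.sum_erase_eq_sub]
  · simp [weightedLaplacian, hij]

theorem weightedLaplacian_row (w : V → V → R) (i : V) :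
    weightedLaplacian w i = ∑ j, w i j • (Pi.single i 1 - Pi.single j 1) := by
  ext k
  simp [weightedLaplacian, Matrix.diagonal_apply, Pi.single_apply, mul_sub, eq_comm]

theorem det_of_sum_smul {ι : Type*} [Fintype ι] (c : V → ι → R) (v : V → ι → V → R) :
    (Matrix.of fun i => ∑ j, c i j • v i j).det =
      ∑ f : V → ι, (∏ i, c i (f i)) * (Matrix.of fun i => v i (f i)).det :=
  (Matrix.detRowAlternating.toMultilinearMap.map_sum fun i j => c i j • v i j).trans <|
    Finset.sum_congr rfl fun f _ => Matrix.detRowAlternating.toMultilinearMap.map_smul_univ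
      (fun i => c i (f i)) fun i => v i (f i)

theorem prod_update_single {M : Type*} [CommMonoidWithZero M] (w : V → V → M) (o : V) (f : V → V) :
    ∏ i, Function.update w o (Pi.single o 1) i (f i) =
      if f o = o then ∏ i ∈ {o}ᶜ, w i (f i) else 0 := by
  have hprod : ∏ i ∈ {o}ᶜ, Function.update w o (Pi.single o 1) i (f i) = ∏ i ∈ {o}ᶜ, w i (f i) :=
    Finset.prod_congr rfl fun i hi => by rw [Function.update_of_ne (by simpa using hi)]
  rw [Fintype.prod_eq_mul_prod_compl o, hprod, Function.update_self, Pi.single_apply, ite_mul,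
    one_mul, zero_mul]

theorem adjugate_weightedLaplacian_eq_sum_det (w : V → V → R) (o : V) :
    (weightedLaplacian w).adjugate o o =
      ∑ f : V → V with f o = o, (∏ i ∈ {o}ᶜ, w i (f i)) * (parentMatrix R o f).det := by
  have hrow : (weightedLaplacian w).updateRow o (Pi.single o 1) = Matrix.of fun i =>
      ∑ j, Function.update w o (Pi.single o 1) i j •
        (if i = o then Pi.single o 1 else Pi.single i 1 - Pi.single j 1 : V → R) := by
    ext i : 1
    by_cases hi : i = o
    · subst hi
      simp [← Finset.sum_smul]
    · simp [hi, weightedLaplacian_row]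
  rw [Matrix.adjugate_apply, hrow, det_of_sum_smul, Finset.sum_filter]
  refine Finset.sum_congr rfl fun f _ => ?_
  rw [prod_update_single, ite_mul, zero_mul]
  rfl

open scoped Classical in
theorem adjugate_weightedLaplacian_eq_sum_isParentMap (w : V → V → R) (o : V) :
    (weightedLaplacian w).adjugate o o =
      ∑ f : V → V with IsParentMap o f, ∏ i ∈ {o}ᶜ, w i (f i) := by
  rw [adjugate_weightedLaplacian_eq_sum_det, Finset.sum_filter, Finset.sum_filter]
  refine Finset.sum_congr rfl fun f _ => ?_
  by_cases ho : f o = o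
  · rw [if_pos ho, det_parentMatrix ho, mul_ite, mul_one, mul_zero]
  · rw [if_neg ho, if_neg fun hf => ho hf.apply_root]

theorem stmt_3_general (w : Sym2 V → R) :
    (weightedLaplacian fun i j => w s(i, j)).adjugate.trace =
        Fintype.card V * spanningTreeSum w ∧
      ∀ i, (weightedLaplacian fun i j => w s(i, j)).adjugate i i = spanningTreeSum w := by
  have hcofactor (i : V) :
      (weightedLaplacian fun i j => w s(i, j)).adjugate i i = spanningTreeSum w := by
    rw [adjugate_weightedLaplacian_eq_sum_isParentMap, sum_isParentMap_eq_spanningTreeSum]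
  exact ⟨by simp [Matrix.trace, hcofactor], hcofactor⟩

/-- Théorème 6.5 (weighted matrix-tree identity for `κ`): for the Kirchhoff-type
matrix `A` with `A_{ij} = −y_{ij}` (`i ≠ j`) and `A_{ii} = ∑_{j≠i} y_{ij}`,
`trace(adjugate A) = r · ∑_T ∏_{{i,j}∈T} y_{ij}`, the sum being over spanning
trees of the complete graph on `{1,…,r}`; equivalently every principal cofactor
of `A` equals the spanning-tree generating polynomial. -/
theorem stmt_3 (r : ℕ) (hr : 1 ≤ r) (y : Fin r → Fin r → ℂ)
    (hsym : ∀ i j, y i j = y j i)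
    (A : Matrix (Fin r) (Fin r) ℂ)
    (hA : ∀ i j, A i j
      = if i = j then ∑ l ∈ Finset.univ.filter (fun l => l ≠ i), y i l else - y i j) :
    Matrix.trace A.adjugate = (r : ℂ) * treeSum r (Sym2.lift ⟨y, hsym⟩) ∧
      ∀ i, A.adjugate i i = treeSum r (Sym2.lift ⟨y, hsym⟩) := by
  obtain rfl : A = weightedLaplacian y := Matrix.ext fun i j =>
    (hA i j).trans (weightedLaplacian_apply y i j).symm
  simpa [treeSum_eq_spanningTreeSum] using stmt_3_general (Sym2.lift ⟨y, hsym⟩)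
end

section
/- Let n ≥ 1 and let A be an n×n complex matrix each of whose rows sums to zero (∑_{j} A_{ij} = 0 for every i). Then for every u_1,…,u_n ∈ ℂ, det(A + U) = (∑_{i=1}^n u_i) · trace(adjugate A), where U is the n×n matrix whose (i,j) entry is u_j (i.e. U = J_n·diag(u_1,…,u_n) with J_n the all-ones matrix). In particular, when ∑_i u_i ≠ 0, κ(A) := (1/n)·trace(adjugate A) = det(A + J_n·diag(u)) / (n·∑_i u_i). -/
/-!
Write `B = A + v uᵀ`. Column operations give `adj B v = adj A v`: once a column of `B` is replaced
by `v`, the multiples of `v` in the other columns can be cleared. If moreover `A w = 0`, then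
`B w = (u ⬝ w) v`, and applying `adj B` yields `det B • w = (u ⬝ w) • adj A v`. For `w = 1` this is
used twice: with `v = e_j` and `u = e_k` it shows that the entries of each column of `adj A` are
equal, so that `adj A 1` is the constant vector `trace (adj A)`; with `v = 1` it then becomes the
formula for `det (A + 1 uᵀ)`.
-/

section CommRing

open Matrix

variable {ι R : Type*} [Fintype ι] [DecidableEq ι] [CommRing R]

theorem cramer_add_vecMulVec_self (A : Matrix ι ι R) (v u : ι → R) :
    cramer (A + vecMulVec v u) v = cramer A v := by
  ext i
  rw [cramer_apply, cramer_apply, ← det_transpose, ← det_transpose (A.updateCol i v)]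
  refine det_eq_of_forall_row_eq_smul_add_const (Function.update u i 0) i (by simp) fun j r => ?_
  obtain rfl | hj := eq_or_ne j i
  · simp
  · simp [hj, vecMulVec_apply, mul_comm]

theorem det_add_vecMulVec_smul_of_mulVec_eq_zero {A : Matrix ι ι R} {w : ι → R}
    (hw : A *ᵥ w = 0) (v u : ι → R) :
    (A + vecMulVec v u).det • w = (u ⬝ᵥ w) • (A.adjugate *ᵥ v) := by
  set B := A + vecMulVec v u
  have mulVec_w : B *ᵥ w = (u ⬝ᵥ w) • v := by
    rw [add_mulVec, hw, zero_add, vecMulVec_mulVec, op_smul_eq_smul]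
  calc B.det • w = B.adjugate *ᵥ (B *ᵥ w) := by
        rw [mulVec_mulVec, adjugate_mul, smul_mulVec, one_mulVec]
    _ = (u ⬝ᵥ w) • cramer B v := by rw [mulVec_w, mulVec_smul, cramer_eq_adjugate_mulVec]
    _ = (u ⬝ᵥ w) • (A.adjugate *ᵥ v) := by
        rw [cramer_add_vecMulVec_self, cramer_eq_adjugate_mulVec]

theorem adjugate_apply_eq_of_mulVec_one_eq_zero {A : Matrix ι ι R} (hA : A *ᵥ 1 = 0)
    (i k j : ι) : A.adjugate i j = A.adjugate k j := by
  have det_eq_adjugate (l : ι) :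
      (A + vecMulVec (Pi.single j 1) (Pi.single k 1)).det = A.adjugate l j := by
    simpa using congrFun
      (det_add_vecMulVec_smul_of_mulVec_eq_zero hA (Pi.single j 1) (Pi.single k 1)) l
  rw [← det_eq_adjugate i, det_eq_adjugate k]

theorem adjugate_mulVec_one_apply_of_mulVec_one_eq_zero {A : Matrix ι ι R}
    (hA : A *ᵥ 1 = 0) (i : ι) :
    (A.adjugate *ᵥ 1) i = A.adjugate.trace := by
  simp only [mulVec, dotProduct_one]
  exact Finset.sum_congr rfl fun j _ => adjugate_apply_eq_of_mulVec_one_eq_zero hA i j j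

theorem det_add_replicateRow_of_mulVec_one_eq_zero [Nonempty ι] {A : Matrix ι ι R}
    (hA : A *ᵥ 1 = 0) (u : ι → R) :
    (A + replicateRow ι u).det = (∑ i, u i) * A.adjugate.trace := by
  obtain ⟨i⟩ := ‹Nonempty ι›
  simpa [dotProduct_one, adjugate_mulVec_one_apply_of_mulVec_one_eq_zero hA] using
    congrFun (det_add_vecMulVec_smul_of_mulVec_eq_zero hA 1 u) i

end CommRing

theorem stmt_6_general {ι K : Type*} [Fintype ι] [DecidableEq ι] [Nonempty ι] [Field K]
    (A : Matrix ι ι K) (hA : ∀ i, ∑ j, A i j = 0) (u : ι → K) :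
    (A + Matrix.of fun _ j => u j).det = (∑ i, u i) * Matrix.trace A.adjugate ∧
      ((Fintype.card ι : K) ≠ 0 → (∑ i, u i) ≠ 0 →
        (1 / (Fintype.card ι : K)) * Matrix.trace A.adjugate
          = (A + Matrix.of fun _ j => u j).det / ((Fintype.card ι : K) * ∑ i, u i)) := by
  have mulVec_one_eq_zero : A.mulVec 1 = 0 := by
    ext i
    simpa [Matrix.mulVec, dotProduct_one] using hA i
  have det_eq : (A + Matrix.of fun _ j => u j).det = (∑ i, u i) * Matrix.trace A.adjugate :=
    det_add_replicateRow_of_mulVec_one_eq_zero mulVec_one_eq_zero u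
  refine ⟨det_eq, fun card_ne_zero sum_ne_zero => ?_⟩
  rw [det_eq]
  field_simp

/-- Part (d) of Lemme 6.2: if every row of `A` sums to zero then, for every `u`,
`det(A + U) = (∑ u_i) · trace(adjugate A)` where `U_{ij} = u_j`; in particular
when `∑ u_i ≠ 0`, `κ(A) = det(A + U)/(n·∑ u_i)`. -/
theorem stmt_6 (n : ℕ) (hn : 1 ≤ n) (A : Matrix (Fin n) (Fin n) ℂ)
    (hA : ∀ i, ∑ j, A i j = 0) (u : Fin n → ℂ) :
    (A + Matrix.of fun _ j => u j).det = (∑ i, u i) * Matrix.trace A.adjugate ∧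
      ((∑ i, u i) ≠ 0 →
        (1 / (n : ℂ)) * Matrix.trace A.adjugate
          = (A + Matrix.of fun _ j => u j).det / ((n : ℂ) * ∑ i, u i)) := by
  have : NeZero n := ⟨Nat.one_le_iff_ne_zero.mp hn⟩
  simpa [NeZero.ne n] using stmt_6_general A hA u
end

section
/- Let n ≥ 1 and let A be an n×n complex matrix each of whose rows sums to zero and each of whose columns sums to zero. Then: (i) all principal cofactors of A are equal, i.e. all diagonal entries of adjugate A coincide; and (ii) for all u_1,…,u_n, v_1,…,v_n ∈ ℂ, det(A + (u_i·v_j)_{i,j}) = (∑_{i=1}^n u_i)·(∑_{j=1}^n v_j)·C, where (u_i·v_j)_{i,j} is the rank-one matrix with (i,j) entry u_i·v_j and C is the common value of the principal cofactors of A (so C = trace(adjugate A)/n). -/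
/-!
If `A *ᵥ w = 0`, replacing a row of `A` by a unit vector and applying Cramer's rule to `w` shows
that every column of `A.adjugate` is proportional to `w`; likewise every row is proportional to any
left null vector. When `A` kills the all-ones vector on both sides, all entries of `A.adjugate` are
therefore equal to one constant `C`, and `A.det = 0`. The matrix determinant lemma
`det (A + u vᵀ) = det A + vᵀ (adj A) u`, valid for singular `A` too, then gives `(∑ u) (∑ v) C`.
-/

open Matrix

section CommRing

variable {ι R : Type*} [Fintype ι] [DecidableEq ι] [CommRing R]

theorem adjugate_apply_mul_of_mulVec_eq_zero {A : Matrix ι ι R} {w : ι → R} (hw : A *ᵥ w = 0)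
    (i k j : ι) : A.adjugate i j * w k = A.adjugate k j * w i := by
  set M := A.updateRow j (Pi.single i 1) with hM
  have hMw : M *ᵥ w = Pi.single j (w i) := by
    ext l
    obtain rfl | hl := eq_or_ne l j
    · simp [hM, mulVec]
    · simpa [hM, mulVec, hl] using congrFun hw l
  have hadj : M.adjugate k j = A.adjugate k j := by
    simp only [hM, adjugate_apply, updateRow_idem]
  calc A.adjugate i j * w k = ((M.adjugate * M) *ᵥ w) k := by
        simp [adjugate_mul, adjugate_apply, smul_mulVec, hM]
    _ = A.adjugate k j * w i := by
        rw [← mulVec_mulVec, hMw, mulVec_single, ← hadj]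
        simp

theorem adjugate_apply_mul_of_vecMul_eq_zero {A : Matrix ι ι R} {z : ι → R} (hz : z ᵥ* A = 0)
    (i j l : ι) : A.adjugate i j * z l = A.adjugate i l * z j := by
  simpa [← adjugate_transpose] using
    adjugate_apply_mul_of_mulVec_eq_zero (A := Aᵀ) (w := z) (by rwa [mulVec_transpose]) j l i

theorem vecMul_adjugate_apply (A : Matrix ι ι R) (v : ι → R) (i : ι) :
    (v ᵥ* A.adjugate) i = (A.updateRow i v).det := by
  rw [← cramer_transpose_apply, cramer_eq_adjugate_mulVec, ← adjugate_transpose, mulVec_transpose]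

theorem vecMul_adjugate_add_vecMulVec (A : Matrix ι ι R) (u v : ι → R) :
    v ᵥ* (A + vecMulVec u v).adjugate = v ᵥ* A.adjugate := by
  ext i
  simp only [vecMul_adjugate_apply]
  -- Each row other than `i` is perturbed by a multiple of `v`, which is row `i` after the update.
  refine det_eq_of_forall_row_eq_smul_add_const (Function.update u i 0) i (by simp) fun k j => ?_
  obtain rfl | hk := eq_or_ne k i
  · simp
  · simp [hk, vecMulVec_apply]

theorem det_add_vecMulVec_single (A : Matrix ι ι R) (i : ι) (c : R) (v : ι → R) :
    (A + vecMulVec (Pi.single i c) v).det = A.det + c * (A.updateRow i v).det := by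
  have hrow : A + vecMulVec (Pi.single i c) v = A.updateRow i (A i + c • v) := by
    ext k j
    obtain rfl | hk := eq_or_ne k i
    · simp [vecMulVec_apply]
    · simp [hk, vecMulVec_apply]
  rw [hrow, det_updateRow_add, det_updateRow_smul, updateRow_eq_self]

theorem det_add_vecMulVec (A : Matrix ι ι R) (u v : ι → R) :
    (A + vecMulVec u v).det = A.det + v ᵥ* A.adjugate ⬝ᵥ u := by
  induction u using Pi.single_induction generalizing A with
  | zero => simp
  | single i c => rw [det_add_vecMulVec_single, dotProduct_single, vecMul_adjugate_apply, mul_comm]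
  | add u₁ u₂ ih₁ ih₂ =>
    rw [add_vecMulVec, ← add_assoc, ih₂, ih₁, vecMul_adjugate_add_vecMulVec, dotProduct_add,
      add_assoc]

theorem adjugate_apply_eq_of_sum_eq_zero {A : Matrix ι ι R} (hrow : ∀ i, ∑ j, A i j = 0)
    (hcol : ∀ j, ∑ i, A i j = 0) (i j k l : ι) : A.adjugate i j = A.adjugate k l := by
  have hright : A *ᵥ 1 = 0 := funext fun i => (dotProduct_one _).trans (hrow i)
  have hleft : 1 ᵥ* A = 0 := funext fun j => (one_dotProduct _).trans (hcol j)
  calc A.adjugate i j = A.adjugate k j := by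
        simpa using adjugate_apply_mul_of_mulVec_eq_zero hright i k j
    _ = A.adjugate k l := by
        simpa using adjugate_apply_mul_of_vecMul_eq_zero hleft k j l

theorem det_add_vecMulVec_of_sum_eq_zero {A : Matrix ι ι R} (hrow : ∀ i, ∑ j, A i j = 0)
    (hcol : ∀ j, ∑ i, A i j = 0) (u v : ι → R) (k : ι) :
    (A + vecMulVec u v).det = (∑ i, u i) * (∑ j, v j) * A.adjugate k k := by
  have hdet : A.det = 0 := by
    simp [det_eq_sum_mul_adjugate_row A k,
      adjugate_apply_eq_of_sum_eq_zero hrow hcol _ _ k k, ← Finset.sum_mul, hrow]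
  have hvec (j : ι) : (v ᵥ* A.adjugate) j = (∑ i, v i) * A.adjugate k k := by
    simp [vecMul, dotProduct, Finset.sum_mul,
      adjugate_apply_eq_of_sum_eq_zero hrow hcol _ j k k]
  calc (A + vecMulVec u v).det = ∑ j, (∑ i, v i) * A.adjugate k k * u j := by
        simp only [det_add_vecMulVec, hdet, zero_add, dotProduct, hvec]
    _ = (∑ i, u i) * (∑ j, v j) * A.adjugate k k := by
        rw [← Finset.mul_sum]; ring

end CommRing

theorem stmt_7_general {ι K : Type*} [Fintype ι] [DecidableEq ι] [Field K]
    (hcard : (Fintype.card ι : K) ≠ 0) (A : Matrix ι ι K)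
    (hrow : ∀ i, ∑ j, A i j = 0) (hcol : ∀ j, ∑ i, A i j = 0) :
    (∀ i i', A.adjugate i i = A.adjugate i' i') ∧
      (∀ u v : ι → K,
        (A + of fun i j => u i * v j).det
          = (∑ i, u i) * (∑ j, v j) * (trace A.adjugate / (Fintype.card ι : K))) := by
  have hdiag (i i' : ι) := adjugate_apply_eq_of_sum_eq_zero hrow hcol i i i' i'
  refine ⟨hdiag, fun u v => ?_⟩
  obtain ⟨k⟩ : Nonempty ι := Fintype.card_pos_iff.mp <|
    Nat.pos_of_ne_zero fun h => hcard <| by rw [h, Nat.cast_zero]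
  have htrace : trace A.adjugate / (Fintype.card ι : K) = A.adjugate k k := by
    rw [div_eq_iff hcard]
    simp [trace, hdiag _ k, mul_comm]
  rw [htrace]
  exact det_add_vecMulVec_of_sum_eq_zero hrow hcol u v k

/-- Part (e) of Lemme 6.2: if every row and every column of `A` sums to zero,
then all principal cofactors of `A` are equal, and for all `u, v`,
`det(A + (u_i v_j)) = (∑ u_i)(∑ v_j) · C` where `C = trace(adjugate A)/n` is
the common value of the principal cofactors. -/
theorem stmt_7 (n : ℕ) (hn : 1 ≤ n) (A : Matrix (Fin n) (Fin n) ℂ)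
    (hrow : ∀ i, ∑ j, A i j = 0) (hcol : ∀ j, ∑ i, A i j = 0) :
    (∀ i i', A.adjugate i i = A.adjugate i' i') ∧
      (∀ u v : Fin n → ℂ,
        (A + Matrix.of fun i j => u i * v j).det
          = (∑ i, u i) * (∑ j, v j) * (Matrix.trace A.adjugate / (n : ℂ))) := by
  simpa using stmt_7_general (by simpa using Nat.one_le_iff_ne_zero.mp hn) A hrow hcol
end

section
/- Let m ≥ 1, let ν_1 < ν_2 < ⋯ < ν_m be positive integers, let a_1,…,a_m be positive integers, and let c ∈ ℝ. Set S_i = ∑_{j=1}^m a_j·min(ν_i, ν_j) for 1 ≤ i ≤ m and n = ∑_{j=1}^m ν_j·a_j. Let M be the m×m real matrix with entries M_{ij} = δ_{ij}·c·S_i − c·min(ν_i,ν_j)·a_j (where δ_{ij} is the Kronecker symbol). Then n · trace(adjugate M) = c^{m−1} · ∏_{i=1}^m S_i; equivalently, κ(M) := trace(adjugate M)/m = c^{m−1}·(∏_{i=1}^m S_i)/(n·m). -/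
/-!
All rows of `M` sum to zero, so in the basis of the partial sums `e₀ + ⋯ + eⱼ` its last column
vanishes, and the trace of its adjugate is the single minor omitting the last row and column.
Since `ν` is monotone, `min (ν i) (ν j) = ν (min i j)`, so below the diagonal
`M i j = -c * ν j * a j` does not depend on `i`. Hence that minor is upper triangular, with diagonal
entries `M i i - M (i + 1) i = c * S i`. Only the last `S i` is missing from their product, and it
equals `n`.
-/

section

open Matrix

variable {R : Type*} [CommRing R]

theorem trace_adjugate_mul_mul_of_mul_eq_one {n : Type*} [Fintype n] [DecidableEq n]
    (A : Matrix n n R) {P Q : Matrix n n R} (hPQ : P * Q = 1) :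
    trace (P * A * Q).adjugate = trace A.adjugate := by
  rw [adjugate_mul_distrib, adjugate_mul_distrib, trace_mul_comm, mul_assoc,
    ← adjugate_mul_distrib, mul_eq_one_comm.mp hPQ, adjugate_one, mul_one]

theorem trace_adjugate_of_column_eq_zero {k : ℕ} {A : Matrix (Fin (k + 1)) (Fin (k + 1)) R}
    (j : Fin (k + 1)) (hA : ∀ i, A i j = 0) :
    trace A.adjugate = (A.submatrix j.succAbove j.succAbove).det := by
  have diag_eq_zero (i : Fin (k + 1)) (hij : i ≠ j) : A.adjugate i i = 0 := by
    obtain ⟨l, hl⟩ := Fin.exists_succAbove_eq hij.symm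
    rw [adjugate_fin_succ_eq_det_submatrix, det_eq_zero_of_column_eq_zero l, mul_zero]
    exact fun _ ↦ by rw [submatrix_apply, hl, hA]
  calc trace A.adjugate = A.adjugate j j :=
        Finset.sum_eq_single j (fun i _ ↦ diag_eq_zero i) (by simp)
    _ = (A.submatrix j.succAbove j.succAbove).det := by
        rw [adjugate_fin_succ_eq_det_submatrix, Even.neg_one_pow ⟨_, rfl⟩, one_mul]

end

section

open Matrix

/-- The matrix whose columns are the partial sums `e₀ + ⋯ + eⱼ` of the standard basis; it is the
change of basis that triangularises the matrices below. -/
def partialSumMatrix (R : Type*) [Ring R] (k : ℕ) : Matrix (Fin (k + 1)) (Fin (k + 1)) R :=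
  of fun i j ↦ if i ≤ j then 1 else 0

/-- The matrix of consecutive differences `v ↦ (v₀ - v₁, …, vₖ₋₁ - vₖ, vₖ)`, given by its rows;
it is the inverse of `partialSumMatrix`. -/
def differenceMatrix (R : Type*) [Ring R] (k : ℕ) : Matrix (Fin (k + 1)) (Fin (k + 1)) R :=
  of (Fin.snoc (α := fun _ ↦ Fin (k + 1) → R)
    (fun i ↦ Pi.single i.castSucc 1 - Pi.single i.succ 1) (Pi.single (Fin.last k) 1))

variable {R : Type*} [Ring R] {k : ℕ} (A : Matrix (Fin (k + 1)) (Fin (k + 1)) R)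

theorem mul_partialSumMatrix_apply (i j : Fin (k + 1)) :
    (A * partialSumMatrix R k) i j = ∑ l ∈ Finset.Iic j, A i l := by
  simp [partialSumMatrix, mul_apply, ← Finset.sum_filter, Finset.filter_ge_eq_Iic]

theorem differenceMatrix_mul_apply_castSucc (i : Fin k) (j : Fin (k + 1)) :
    (differenceMatrix R k * A) i.castSucc j = A i.castSucc j - A i.succ j := by
  simp [differenceMatrix, mul_apply, Pi.single_apply, sub_mul]

theorem differenceMatrix_mul_apply_last (j : Fin (k + 1)) :
    (differenceMatrix R k * A) (Fin.last k) j = A (Fin.last k) j := by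
  simp [differenceMatrix, mul_apply, Pi.single_apply]

theorem differenceMatrix_mul_partialSumMatrix :
    differenceMatrix R k * partialSumMatrix R k = 1 := by
  ext i j
  cases i using Fin.lastCases with
  | last =>
    simp [differenceMatrix_mul_apply_last, partialSumMatrix, one_apply, Fin.last_le_iff, eq_comm]
  | cast i =>
    rw [differenceMatrix_mul_apply_castSucc]
    simp only [partialSumMatrix, of_apply, one_apply, Fin.le_def, Fin.ext_iff, Fin.val_castSucc,
      Fin.val_succ]
    split_ifs <;> first | omega | simp

end

section

open Matrix

variable {R : Type*} [CommRing R] {k : ℕ} {A : Matrix (Fin (k + 1)) (Fin (k + 1)) R}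

theorem trace_adjugate_of_row_sum_eq_zero (hA : ∀ i, ∑ j, A i j = 0) :
    trace A.adjugate = det (of fun i j : Fin k ↦
      ∑ l ∈ Finset.Iic j.castSucc, (A i.castSucc l - A i.succ l)) := by
  rw [← trace_adjugate_mul_mul_of_mul_eq_one A differenceMatrix_mul_partialSumMatrix,
    trace_adjugate_of_column_eq_zero (Fin.last k)]
  · congr 1
    ext i j
    simp [mul_partialSumMatrix_apply, differenceMatrix_mul_apply_castSucc]
  · intro i
    have last_column_eq_zero (l : Fin (k + 1)) :
        (A * partialSumMatrix R k) l (Fin.last k) = 0 := by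
      rw [mul_partialSumMatrix_apply, ← Fin.top_eq_last, Finset.Iic_top, hA]
    rw [mul_assoc, mul_apply]
    exact Finset.sum_eq_zero fun l _ ↦ by rw [last_column_eq_zero, mul_zero]

theorem trace_adjugate_of_row_sum_eq_zero_of_succ_row_eq (hA : ∀ i, ∑ j, A i j = 0)
    (hrow : ∀ (i : Fin k) (j : Fin (k + 1)), j < i.castSucc → A i.succ j = A i.castSucc j) :
    trace A.adjugate = ∏ i : Fin k, (A i.castSucc i.castSucc - A i.succ i.castSucc) := by
  rw [trace_adjugate_of_row_sum_eq_zero hA, det_of_isUpperTriangular]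
  · refine Finset.prod_congr rfl fun i _ ↦ ?_
    rw [of_apply]
    refine Finset.sum_eq_single i.castSucc (fun l hl hne ↦ ?_) (by simp)
    rw [hrow i l (lt_of_le_of_ne (Finset.mem_Iic.mp hl) hne), sub_self]
  · intro i j hji
    rw [of_apply]
    refine Finset.sum_eq_zero fun l hl ↦ ?_
    have hli : l < i.castSucc :=
      (Finset.mem_Iic.mp hl).trans_lt (Fin.castSucc_lt_castSucc_iff.mpr hji)
    rw [hrow i l hli, sub_self]

end

theorem stmt_9_general {R : Type*} [CommRing R] {m : ℕ} (hm : 1 ≤ m) (b a : Fin m → R) (c : R)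
    (S : Fin m → R) (hS : ∀ i, S i = ∑ j, a j * b (min i j))
    (M : Matrix (Fin m) (Fin m) R)
    (hM : ∀ i j, M i j = (if i = j then c * S i else 0) - c * b (min i j) * a j) :
    (∑ j, b j * a j) * Matrix.trace M.adjugate = c ^ (m - 1) * ∏ i, S i := by
  obtain ⟨k, rfl⟩ := Nat.exists_eq_add_of_le' hm
  have row_sum_eq_zero (i : Fin (k + 1)) : ∑ j, M i j = 0 := by
    simp [hM, hS, Finset.mul_sum, mul_comm, mul_left_comm]
  have below_diagonal {i j : Fin (k + 1)} (hji : j < i) : M i j = -(c * b j * a j) := by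
    rw [hM, if_neg hji.ne', min_eq_right hji.le, zero_sub]
  have diagonal_sub (i : Fin k) :
      M i.castSucc i.castSucc - M i.succ i.castSucc = c * S i.castSucc := by
    rw [below_diagonal i.castSucc_lt_succ, hM, if_pos rfl, min_self, sub_neg_eq_add,
      sub_add_cancel]
  have trace_eq : Matrix.trace M.adjugate = c ^ k * ∏ i : Fin k, S i.castSucc := by
    rw [trace_adjugate_of_row_sum_eq_zero_of_succ_row_eq row_sum_eq_zero fun i j hji ↦ by
      rw [below_diagonal hji, below_diagonal (hji.trans i.castSucc_lt_succ)]]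
    simp [diagonal_sub, Finset.prod_mul_distrib]
  have last_eq : S (Fin.last k) = ∑ j, b j * a j := by
    simp [hS, min_eq_right (Fin.le_last _), mul_comm]
  rw [trace_eq, ← last_eq, Fin.prod_univ_castSucc, Nat.add_sub_cancel]
  ring

/-- The triangularisation identity in the proof of Théorème 6.8:
for `M_{ij} = δ_{ij}·c·S_i − c·min(ν_i,ν_j)·a_j` with `S_i = ∑_j a_j·min(ν_i,ν_j)`
and `n = ∑_j ν_j·a_j`, one has `n · trace(adjugate M) = c^{m−1} · ∏_i S_i`. -/
theorem stmt_9 (m : ℕ) (hm : 1 ≤ m) (ν : Fin m → ℕ) (hν : StrictMono ν)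
    (hνpos : ∀ i, 0 < ν i) (a : Fin m → ℕ) (ha : ∀ i, 0 < a i) (c : ℝ)
    (S : Fin m → ℕ) (hS : ∀ i, S i = ∑ j, a j * min (ν i) (ν j))
    (n : ℕ) (hn : n = ∑ j, ν j * a j)
    (M : Matrix (Fin m) (Fin m) ℝ)
    (hM : ∀ i j, M i j
      = (if i = j then c * (S i : ℝ) else 0)
        - c * ((min (ν i) (ν j) : ℕ) : ℝ) * (a j : ℝ)) :
    (n : ℝ) * Matrix.trace M.adjugate = c ^ (m - 1) * ∏ i, (S i : ℝ) := by
  simpa [hn] using stmt_9_general hm (fun i ↦ (ν i : ℝ)) (fun i ↦ (a i : ℝ)) c (fun i ↦ (S i : ℝ))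
    (by simp [hS, hν.monotone.map_min]) M (by simp [hM, hν.monotone.map_min])
end

section
/- Let t, l, L be positive integers. Then ∑_m μ(m) = 1 if L = 1 and l ∣ t, and ∑_m μ(m) = 0 otherwise, where the sum is over all positive integers m such that (m·l)/gcd(l, m·t) divides L (this is a finite sum: every such m satisfies m ≤ L, and (m·l)/gcd(l, m·t) is an integer since gcd(l, m·t) divides l, which divides m·l). -/
/-!
Clearing the denominator, `m * l ∣ L * gcd(l, m * t) = gcd(L * l, m * (L * t))` says exactly that
`m ∣ L` and `l ∣ L * t`. The second condition does not involve `m`, so the sum is either empty or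
the sum of `μ` over all divisors of `L`.
-/

theorem mul_div_gcd_mul_dvd_iff {l m : ℕ} (hl : 0 < l) (hm : 0 < m) (t L : ℕ) :
    m * l / Nat.gcd l (m * t) ∣ L ↔ m ∣ L ∧ l ∣ L * t := by
  have gcd_pos : 0 < Nat.gcd l (m * t) := Nat.gcd_pos_of_pos_left _ hl
  have gcd_dvd : Nat.gcd l (m * t) ∣ m * l := (Nat.gcd_dvd_left _ _).mul_left m
  calc m * l / Nat.gcd l (m * t) ∣ L
      ↔ m * l ∣ L * Nat.gcd l (m * t) := by
        rw [Nat.div_dvd_iff_dvd_mul gcd_dvd gcd_pos, mul_comm L]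
    _ ↔ m * l ∣ L * l ∧ m * l ∣ m * (L * t) := by
        rw [← Nat.gcd_mul_left, Nat.dvd_gcd_iff, mul_left_comm L m t]
    _ ↔ m ∣ L ∧ l ∣ L * t := by
        rw [Nat.mul_dvd_mul_iff_right hl, Nat.mul_dvd_mul_iff_left hm]

theorem filter_mul_div_gcd_mul_dvd_eq {l : ℕ} (hl : 0 < l) (t L : ℕ) :
    (Finset.Icc 1 L).filter (fun m => m * l / Nat.gcd l (m * t) ∣ L) =
      if l ∣ L * t then L.divisors else ∅ := by
  calc (Finset.Icc 1 L).filter (fun m => m * l / Nat.gcd l (m * t) ∣ L)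
      = (Finset.Icc 1 L).filter (fun m => m ∣ L ∧ l ∣ L * t) :=
        Finset.filter_congr fun m hm => mul_div_gcd_mul_dvd_iff hl (Finset.mem_Icc.1 hm).1 t L
    _ = L.divisors.filter (fun _ => l ∣ L * t) := by
        rw [Nat.divisors, Finset.Ico_add_one_right_eq_Icc, Finset.filter_filter]
    _ = if l ∣ L * t then L.divisors else ∅ := Finset.filter_const _ _

theorem sum_divisors_moebius (n : ℕ) :
    ∑ d ∈ n.divisors, ArithmeticFunction.moebius d = if n = 1 then 1 else 0 := by
  rw [← ArithmeticFunction.coe_mul_zeta_apply, ArithmeticFunction.moebius_mul_coe_zeta,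
    ArithmeticFunction.one_apply]

/-- The unnumbered arithmetic lemma in Section 5.3: the sum of `μ(m)` over the
positive integers `m` such that `(m·l)/gcd(l, m·t)` divides `L` (a finite sum,
every such `m` being at most `L`) equals `1` if `L = 1` and `l ∣ t`, and `0`
otherwise. -/
theorem stmt_13 (t l L : ℕ) (ht : 0 < t) (hl : 0 < l) (hL : 0 < L) :
    (∀ m : ℕ, 0 < m → (m * l) / Nat.gcd l (m * t) ∣ L → m ≤ L) ∧
      (∑ m ∈ (Finset.Icc 1 L).filter (fun m => (m * l) / Nat.gcd l (m * t) ∣ L),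
          ArithmeticFunction.moebius m)
        = if L = 1 ∧ l ∣ t then 1 else 0 := by
  refine ⟨fun m hm h => Nat.le_of_dvd hL ((mul_div_gcd_mul_dvd_iff hl hm t L).1 h).1, ?_⟩
  rw [filter_mul_div_gcd_mul_dvd_eq hl]
  by_cases hlt : l ∣ L * t
  · have dvd_of_eq_one : L = 1 → l ∣ t := by
      rintro rfl
      rwa [one_mul] at hlt
    rw [if_pos hlt, sum_divisors_moebius]
    exact if_congr (and_iff_left_of_imp dvd_of_eq_one).symm rfl rfl
  · have not_dvd : ¬ l ∣ t := fun h => hlt (h.mul_left L)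
    rw [if_neg hlt, Finset.sum_empty, if_neg fun h => not_dvd h.2]
end

section
/- Let n ≥ 1. For x ∈ ℝ^n and 0 ≤ l ≤ n define ϖ_l(x) = ∑_{i=1}^l x_i − (l/n)·∑_{i=1}^n x_i (equivalently ϖ_l(x) = ((n−l)/n)(x_1+⋯+x_l) − (l/n)(x_{l+1}+⋯+x_n)). Let 0 = N_0 < N_1 < ⋯ < N_k = n be integers, and let H, T ∈ ℝ^n satisfy: (a) H is constant on each block, i.e. H_i = H_j whenever N_t < i, j ≤ N_{t+1} for some 0 ≤ t ≤ k−1; (b) T_i ≥ T_{i+1} for all 1 ≤ i ≤ n−1; and (c) ϖ_{N_t}(H − T) ≤ 0 for every 1 ≤ t ≤ k−1. Then ϖ_l(H − T) ≤ 0 for every 0 ≤ l ≤ n. -/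
/-!
The step `ϖ_{l+1}(x) - ϖ_l(x)` is `x_{l+1}` minus the mean of `x`, so `l ↦ ϖ_l(x)` is convex
wherever `x` increases. A sequence that is nonpositive at both ends and convex at every interior
point where it is positive is nonpositive throughout: after a first positive value it could only
keep increasing. For `x = H - T` convexity can fail only at the block boundaries, where
`ϖ_l(x) ≤ 0` is assumed.
-/

section MaximumPrinciple

variable {G : Type*} [AddCommGroup G] [LinearOrder G] [IsOrderedAddMonoid G] {f : ℕ → G} {m n : ℕ}

theorem pos_of_pos_succ_of_convex_of_pos
    (hconv : ∀ l, l + 1 < n → 0 < f (l + 1) → f (l + 1) - f l ≤ f (l + 2) - f (l + 1))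
    (hm : f m ≤ 0) (hm_succ : 0 < f (m + 1)) (hmn : m < n) : 0 < f n := by
  have increasing : ∀ j, m ≤ j → j < n → 0 < f (j + 1) ∧ f j < f (j + 1) := by
    intro j hmj
    induction j, hmj using Nat.le_induction with
    | base => exact fun _ ↦ ⟨hm_succ, hm.trans_lt hm_succ⟩
    | succ j _ ih =>
      intro hjn
      obtain ⟨hpos, hlt⟩ := ih (by lia)
      have hlt_succ : f (j + 1) < f (j + 2) :=
        sub_pos.mp ((sub_pos.mpr hlt).trans_le (hconv j hjn hpos))
      exact ⟨hpos.trans hlt_succ, hlt_succ⟩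
  obtain ⟨j, rfl⟩ : ∃ j, n = j + 1 := ⟨n - 1, by lia⟩
  exact (increasing j (by lia) j.lt_succ_self).1

theorem nonpos_of_convex_of_pos
    (hconv : ∀ l, l + 1 < n → 0 < f (l + 1) → f (l + 1) - f l ≤ f (l + 2) - f (l + 1))
    (h_zero : f 0 ≤ 0) (h_end : f n ≤ 0) {l : ℕ} (hl : l ≤ n) : f l ≤ 0 := by
  induction l with
  | zero => exact h_zero
  | succ l ih =>
    by_contra! hpos
    exact h_end.not_gt (pos_of_pos_succ_of_convex_of_pos hconv (ih (by lia)) hpos hl)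

end MaximumPrinciple

theorem exists_le_and_lt_succ {α : Type*} [LinearOrder α] {N : ℕ → α} {a : α} {k : ℕ}
    (h_zero : N 0 ≤ a) (h_end : a < N k) : ∃ t < k, N t ≤ a ∧ a < N (t + 1) := by
  induction k with
  | zero => exact absurd h_end h_zero.not_gt
  | succ k ih =>
    rcases le_or_gt (N k) a with hle | hlt
    · exact ⟨k, k.lt_succ_self, hle, h_end⟩
    · obtain ⟨t, htk, ht⟩ := ih hlt
      exact ⟨t, htk.trans k.lt_succ_self, ht⟩

section TruncationFunctional

variable {K : Type*} [Field K] {n : ℕ}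

/-- The functional `ϖ_l(x)`: the sum of the first `l` coordinates of `x` minus `l` times the mean
of `x`. Coordinates are indexed from `0`, so the first `l` are those with index `< l`. -/
def truncationFunctional (x : Fin n → K) (l : ℕ) : K :=
  (∑ i ∈ Finset.univ.filter (fun i : Fin n => (i : ℕ) < l), x i) - ((l : K) / (n : K)) * ∑ i, x i

theorem truncationFunctional_zero (x : Fin n → K) : truncationFunctional x 0 = 0 := by
  simp [truncationFunctional]

theorem truncationFunctional_self [CharZero K] (x : Fin n → K) : truncationFunctional x n = 0 := by
  rcases eq_or_ne n 0 with rfl | hn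
  · exact truncationFunctional_zero x
  · simp [truncationFunctional, hn]

theorem truncationFunctional_succ_sub (x : Fin n → K) {l : ℕ} (hl : l < n) :
    truncationFunctional x (l + 1) - truncationFunctional x l = x ⟨l, hl⟩ - (∑ i, x i) / n := by
  have filter_succ : Finset.univ.filter (fun i : Fin n => (i : ℕ) < l + 1) =
      insert ⟨l, hl⟩ (Finset.univ.filter (fun i : Fin n => (i : ℕ) < l)) := by
    ext i
    simp only [Finset.mem_filter, Finset.mem_univ, true_and, Finset.mem_insert, Fin.ext_iff]
    lia
  rw [truncationFunctional, truncationFunctional, filter_succ, Finset.sum_insert (by simp)]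
  push_cast
  ring

variable [LinearOrder K] [IsStrictOrderedRing K]

theorem truncationFunctional_nonpos_of_le_succ_of_pos {x : Fin n → K}
    (hx : ∀ l (hl : l + 1 < n), 0 < truncationFunctional x (l + 1) →
      x ⟨l, by lia⟩ ≤ x ⟨l + 1, hl⟩)
    {l : ℕ} (hl : l ≤ n) : truncationFunctional x l ≤ 0 := by
  refine nonpos_of_convex_of_pos (fun l hln hpos ↦ ?_) (truncationFunctional_zero x).le
    (truncationFunctional_self x).le hl
  rw [truncationFunctional_succ_sub x (by lia), truncationFunctional_succ_sub x hln]
  exact sub_le_sub_right (hx l hln hpos) _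

theorem stmt_16_general {k : ℕ} {N : ℕ → ℕ} (hN0 : N 0 = 0) (hNk : N k = n) {x : Fin n → K}
    (hx : ∀ t < k, MonotoneOn x {i | (i : ℕ) ∈ Set.Ico (N t) (N (t + 1))})
    (hc : ∀ t, 0 < t → t < k → truncationFunctional x (N t) ≤ 0)
    {l : ℕ} (hl : l ≤ n) : truncationFunctional x l ≤ 0 := by
  refine truncationFunctional_nonpos_of_le_succ_of_pos (fun l hln hpos ↦ ?_) hl
  obtain ⟨t, htk, hNt, hlt⟩ : ∃ t < k, N t ≤ l ∧ l < N (t + 1) :=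
    exists_le_and_lt_succ (by lia) (by lia)
  have not_boundary : N (t + 1) ≠ l + 1 := by
    intro hboundary
    have ht_ne : t + 1 ≠ k := by
      rintro rfl
      lia
    exact (hboundary ▸ hc (t + 1) (by lia) (by lia)).not_gt hpos
  exact hx t htk ⟨hNt, hlt⟩ ⟨hNt.trans l.le_succ, lt_of_le_of_ne hlt not_boundary.symm⟩
    (Fin.mk_le_mk.mpr l.le_succ)

end TruncationFunctional

/-- The inequality in the proof of Proposition 3.12: if `H` is constant on the
blocks determined by `0 = N_0 < N_1 < ⋯ < N_k = n`, `T` is weakly decreasing,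
and the truncation functionals `ϖ_{N_t}(H − T)` are nonpositive at the interior
block boundaries `1 ≤ t ≤ k − 1`, then `ϖ_l(H − T) ≤ 0` for every `0 ≤ l ≤ n`,
where `ϖ_l(x) = ∑_{i≤l} x_i − (l/n)·∑_i x_i`. -/
theorem stmt_16 (n : ℕ) (hn : 1 ≤ n) (k : ℕ) (hk : 1 ≤ k)
    (N : ℕ → ℕ) (hN0 : N 0 = 0) (hNk : N k = n)
    (hNmono : ∀ s t : ℕ, s < t → t ≤ k → N s < N t)
    (H T : Fin n → ℝ)
    (w : (Fin n → ℝ) → ℕ → ℝ)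
    (hw : ∀ x l, w x l =
      (∑ i ∈ Finset.univ.filter (fun i : Fin n => (i : ℕ) < l), x i)
        - ((l : ℝ) / (n : ℝ)) * ∑ i, x i)
    (hH : ∀ t : ℕ, t < k → ∀ i j : Fin n,
      N t ≤ (i : ℕ) → (i : ℕ) < N (t + 1) →
      N t ≤ (j : ℕ) → (j : ℕ) < N (t + 1) → H i = H j)
    (hT : ∀ i j : Fin n, i ≤ j → T j ≤ T i)
    (hc : ∀ t : ℕ, 1 ≤ t → t ≤ k - 1 → w (fun i => H i - T i) (N t) ≤ 0) :
    ∀ l : ℕ, l ≤ n → w (fun i => H i - T i) l ≤ 0 := by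
  obtain rfl : w = truncationFunctional := funext₂ hw
  exact fun l ↦ stmt_16_general hN0 hNk (fun t ht i hi j hj hij ↦
    sub_le_sub (hH t ht i j hi.1 hi.2 hj.1 hj.2).le (hT i j hij))
    fun t ht htk ↦ hc t ht (Nat.le_sub_one_of_lt htk)
end
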